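/- Let μ be a crystalline measure on ℝ with uniformly discrete support and uniformly discrete spectrum. Then there exist a lattice L = αℤ with α > 0, finitely many real numbers λ_1, …, λ_J, and trigonometric polynomials P_1, …, P_J such that μ = Σ_{j=1}^J Σ_{λ ∈ λ_j + L} P_j(λ) δ_λ; in particular, supp μ is contained in a finite union of translates of the single lattice L. -/

import Mathlib

open MeasureTheory SchwartzMap Metric Set
open scoped Pointwise ENNReal NNReal

noncomputable section

/-- The space `S*(ℝ)` of tempered distributions on the real line. -/
abbrev TemperedDistR : Type := SchwartzMap ℝ ℂ →L[ℂ] ℂ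

/-- The Fourier transform of a tempered distribution on `ℝ`: `f̂(φ) = f(φ̂)`. -/
def fourierTDR (f : TemperedDistR) : TemperedDistR :=
  f.comp (fourierTransformCLM ℂ)

/-- The support of a tempered distribution on `ℝ`. -/
def tdSupportR (f : TemperedDistR) : Set ℝ :=
  {x | ∀ U : Set ℝ, IsOpen U → x ∈ U →
    ∃ φ : SchwartzMap ℝ ℂ, HasCompactSupport (⇑φ) ∧ tsupport (⇑φ) ⊆ U ∧ f φ ≠ 0}

/-- A set in `ℝ` is locally finite if its intersection with every ball is finite. -/
def LocFiniteR (A : Set ℝ) : Prop :=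
  ∀ (x : ℝ) (r : ℝ), (A ∩ Metric.ball x r).Finite

/-- A set in `ℝ` is uniformly discrete if distances between distinct points
are bounded below by a positive constant. -/
def UniformlyDiscreteR (A : Set ℝ) : Prop :=
  ∃ η > (0:ℝ), ∀ x ∈ A, ∀ y ∈ A, x ≠ y → η ≤ dist x y

/-- The exponential `e^{2πixw}`. -/
def e2piR (x w : ℝ) : ℂ :=
  Complex.exp (((2 * Real.pi * (x * w) : ℝ) : ℂ) * Complex.I)

/-- A trigonometric polynomial on `ℝ`: a finite sum `Σ c_ω e^{2πixω}`. -/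
def IsTrigPolyR (P : ℝ → ℂ) : Prop :=
  ∃ (n : ℕ) (cc : Fin n → ℂ) (w : Fin n → ℝ),
    ∀ x, P x = ∑ i, cc i * e2piR x (w i)

/-- The pure point measure `μ = Σ_λ a(λ) δ_λ` on `ℝ` belongs to `S*(ℝ)` and is
represented there by the tempered distribution `f`. -/
def RepMeasureR (a : ℝ → ℂ) (f : TemperedDistR) : Prop :=
  {x | a x ≠ 0}.Countable ∧
  (∀ φ : SchwartzMap ℝ ℂ, Summable fun lam => ‖a lam‖ * ‖φ lam‖) ∧
  (∀ φ : SchwartzMap ℝ ℂ, f φ = ∑' lam, a lam * φ lam)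
open scoped FourierTransform

abbrev SR := SchwartzMap ℝ ℂ

lemma e2_add_right (x s t : ℝ) : e2piR x (s + t) = e2piR x s * e2piR x t := by
  unfold e2piR; rw [← Complex.exp_add]; congr 1; push_cast; ring

lemma e2_add_left (x y t : ℝ) : e2piR (x + y) t = e2piR x t * e2piR y t := by
  unfold e2piR; rw [← Complex.exp_add]; congr 1; push_cast; ring

lemma e2_comm (x y : ℝ) : e2piR x y = e2piR y x := by
  unfold e2piR; rw [mul_comm x y]

lemma e2_norm (x y : ℝ) : ‖e2piR x y‖ = 1 := by
  unfold e2piR; exact Complex.norm_exp_ofReal_mul_I _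

lemma e2_zero_right (x : ℝ) : e2piR x 0 = 1 := by simp [e2piR]

lemma e2_zero_left (x : ℝ) : e2piR 0 x = 1 := by simp [e2piR]

lemma e2_ne (x y : ℝ) : e2piR x y ≠ 0 := Complex.exp_ne_zero _

lemma e2_neg_neg (x y : ℝ) : e2piR (-x) (-y) = e2piR x y := by
  unfold e2piR; congr 2; push_cast; ring

lemma e2_neg_left (x y : ℝ) : e2piR (-x) y = e2piR x (-y) := by
  unfold e2piR; congr 2; push_cast; ring

lemma e2_conj (x y : ℝ) : (starRingEnd ℂ) (e2piR x y) = e2piR x (-y) := by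
  unfold e2piR
  rw [← Complex.exp_conj, map_mul, Complex.conj_ofReal, Complex.conj_I]; congr 1
  push_cast; ring

lemma e2_mul_neg (x y : ℝ) : e2piR x y * e2piR x (-y) = 1 := by
  rw [← e2_add_right, add_neg_cancel, e2_zero_right]

lemma e2_nat (x y : ℝ) (n : ℕ) : e2piR (n * x) y = e2piR x y ^ n := by
  unfold e2piR; rw [← Complex.exp_nat_mul]; congr 1; push_cast; ring

lemma e2_int (x y : ℝ) (n : ℤ) : e2piR (n * x) y = e2piR x y ^ n := by
  unfold e2piR; rw [← Complex.exp_int_mul]; congr 1; push_cast; ring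

lemma e2_eq_iff (x y z : ℝ) (hx : x ≠ 0) :
    e2piR x y = e2piR x z ↔ ∃ n : ℤ, y = z + (1 / x) * n := by
  unfold e2piR
  rw [Complex.exp_eq_exp_iff_exists_int]
  have hpi : (2 * Real.pi : ℝ) ≠ 0 := by positivity
  constructor
  · rintro ⟨n, hn⟩
    refine ⟨n, ?_⟩
    have h2 : ((2 * Real.pi * (x * y) : ℝ) : ℂ) = ((2 * Real.pi * (x * z) + n * (2 * Real.pi) : ℝ) : ℂ) := by
      have := Complex.I_ne_zero
      apply mul_right_cancel₀ this
      rw [hn]; push_cast; ring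
    have h3 := Complex.ofReal_injective h2
    have h4 : (2 * Real.pi) * (x * y) = (2 * Real.pi) * (x * z + n) := by linarith
    have h5 := mul_left_cancel₀ hpi h4
    field_simp
    linarith
  · rintro ⟨n, hn⟩
    refine ⟨n, ?_⟩
    rw [hn]; push_cast
    have : (x : ℂ) ≠ 0 := by exact_mod_cast hx
    field_simp

def trS (s : ℝ) (ψ : SR) : SR := compSubConstCLM ℂ s ψ

@[simp] lemma trS_apply (s : ℝ) (ψ : SR) (x : ℝ) : trS s ψ x = ψ (x - s) := rfl

lemma four_apply (ψ : SR) (y : ℝ) : (𝓕 ψ) y = ∫ t, e2piR t (-y) * ψ t := by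
  rw [SchwartzMap.fourier_coe, Real.fourier_eq']
  congr 1; ext t
  unfold e2piR
  simp only [smul_eq_mul]
  congr 2
  simp
  ring

lemma four_tr (s : ℝ) (ψ : SR) (y : ℝ) : (𝓕 (trS s ψ)) y = e2piR y (-s) * (𝓕 ψ) y := by
  rw [four_apply, four_apply, ← integral_const_mul]
  rw [← integral_add_right_eq_self _ s]
  congr 1; ext t
  simp only [trS_apply, add_sub_cancel_right]
  rw [e2_add_left, ← e2_neg_neg y, neg_neg, e2_comm (-y) s]
  ring

def modS (x : ℝ) (ψ : SR) : SR := 𝓕 (trS (-x) (𝓕⁻ ψ))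

lemma modS_apply (x : ℝ) (ψ : SR) (t : ℝ) : modS x ψ t = e2piR x t * ψ t := by
  unfold modS
  rw [four_tr, neg_neg, FourierTransform.fourier_fourierInv_eq, e2_comm]

lemma four_mod (x : ℝ) (ψ : SR) (y : ℝ) : (𝓕 (modS x ψ)) y = (𝓕 ψ) (y - x) := by
  rw [four_apply, four_apply]
  congr 1; ext t
  rw [modS_apply, ← mul_assoc, e2_comm x t, ← e2_add_right]
  congr 2; ring

lemma four_four (ψ : SR) (y : ℝ) : (𝓕 (𝓕 ψ)) y = ψ (-y) := by
  have h : (𝓕⁻ (𝓕 ψ)) (-y) = (𝓕 (𝓕 ψ)) y := by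
    rw [SchwartzMap.fourierInv_coe, Real.fourierInv_eq_fourier_neg, neg_neg, SchwartzMap.fourier_coe (𝓕 ψ)]
  rw [← h, FourierTransform.fourierInv_fourier_eq]

/-- a bump Schwartz function -/
lemma exists_bump (x r : ℝ) (hr : 0 < r) : ∃ u : SR, u x = 1 ∧ (∀ y, r ≤ |y - x| → u y = 0) ∧
    (∀ y, ‖u y‖ ≤ 1) ∧ (𝓕 u) 0 ≠ 0 := by
  let B : ContDiffBump x := ⟨r / 2, r, by positivity, by linarith⟩
  have hc : HasCompactSupport (fun y => ((B y : ℝ) : ℂ)) := by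
    apply B.hasCompactSupport.comp_left (g := fun t : ℝ => (t : ℂ)); simp
  have hs : ContDiff ℝ ((⊤ : ℕ∞) : WithTop ℕ∞) (fun y => ((B y : ℝ) : ℂ)) :=
    Complex.ofRealCLM.contDiff.comp B.contDiff
  refine ⟨hc.toSchwartzMap hs, ?_, ?_, ?_, ?_⟩
  · change ((B x : ℝ) : ℂ) = 1
    rw [B.one_of_mem_closedBall (by simp [B]; positivity)]; simp
  · intro y hy
    change ((B y : ℝ) : ℂ) = 0
    rw [B.zero_of_le_dist (by simpa [B, Real.dist_eq] using hy)]; simp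
  · intro y
    change ‖((B y : ℝ) : ℂ)‖ ≤ 1
    rw [Complex.norm_real, Real.norm_of_nonneg B.nonneg]; exact B.le_one
  · rw [four_apply]
    have : (∫ t, e2piR t (-0) * (hc.toSchwartzMap hs) t) = ((∫ t, B t : ℝ) : ℂ) := by
      rw [← integral_complex_ofReal]
      congr 1; ext t
      simp only [neg_zero, e2_zero_right, one_mul]; rfl
    rw [this]
    exact_mod_cast (B.integral_pos (μ := volume)).ne'

/-- dilation -/
lemma exists_dil (ψ : SR) (M : ℝ) (hM : 0 < M) : ∃ θ : SR, (∀ t, θ t = ψ (t / M)) ∧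
    ∀ y, (𝓕 θ) y = (M : ℂ) * (𝓕 ψ) (M * y) := by
  let g : ℝ ≃L[ℝ] ℝ := ContinuousLinearEquiv.unitsEquivAut ℝ (Units.mk0 M⁻¹ (by positivity))
  refine ⟨compCLMOfContinuousLinearEquiv ℂ g ψ, ?_, ?_⟩
  · intro t
    simp [g, div_eq_mul_inv]
  · intro y
    have h1 : ∀ t, (compCLMOfContinuousLinearEquiv ℂ g ψ) t = ψ (t / M) := by
      intro t; simp [g, div_eq_mul_inv]
    rw [four_apply, four_apply]
    have h2 := Measure.integral_comp_div (fun t => e2piR t (-(M * y)) * ψ t) M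
    rw [abs_of_pos hM] at h2
    rw [← Complex.real_smul, ← h2]
    congr 1; ext t
    rw [h1]
    congr 1
    unfold e2piR
    congr 3
    field_simp

lemma schwartz_decay (φ : SR) (k : ℕ) : ∃ C > 0, ∀ x, |x| ^ k * ‖φ x‖ ≤ C := by
  obtain ⟨C, hC⟩ := φ.decay k 0
  exact ⟨C, hC.1, fun x => by simpa using hC.2 x⟩


structure CPair (a b : ℝ → ℂ) : Prop where
  lfa : LocFiniteR {x | a x ≠ 0}
  lfb : LocFiniteR {x | b x ≠ 0}
  uda : ∃ η > (0:ℝ), ∀ x y, a x ≠ 0 → a y ≠ 0 → |x - y| < η → x = y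
  udb : ∃ η > (0:ℝ), ∀ x y, b x ≠ 0 → b y ≠ 0 → |x - y| < η → x = y
  sa : ∀ φ : SR, Summable fun l => ‖a l‖ * ‖φ l‖
  sb : ∀ φ : SR, Summable fun l => ‖b l‖ * ‖φ l‖
  eq : ∀ φ : SR, ∑' l, a l * (𝓕 φ) l = ∑' s, b s * φ s


lemma CPair.dual {a b : ℝ → ℂ} (P : CPair a b) : CPair b (fun x => a (-x)) where
  lfa := P.lfb
  lfb := by
    intro x r
    have := (P.lfa (-x) r).image (fun t => -t)
    refine this.subset ?_
    rintro y ⟨h1, h2⟩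
    refine ⟨-y, ⟨h1, ?_⟩, by simp⟩
    rw [mem_ball, Real.dist_eq] at *
    rw [← abs_neg]; convert h2 using 2; ring
  uda := P.udb
  udb := by
    obtain ⟨η, h, h2⟩ := P.uda
    refine ⟨η, h, fun x y hx hy hxy => neg_injective (h2 _ _ hx hy ?_)⟩
    rw [← abs_neg]; convert hxy using 2; ring
  sa := P.sb
  sb := by
    intro φ
    have := P.sa (𝓕 (𝓕 φ))
    rw [← (Equiv.neg ℝ).summable_iff] at this
    convert this using 2 with x
    simp [four_four]
  eq := by
    intro φ
    rw [← P.eq, ← (Equiv.neg ℝ).tsum_eq]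
    congr 1; ext x
    simp only [Equiv.neg_apply]; rw [four_four, neg_neg]

lemma CPair.sa' {a b : ℝ → ℂ} (P : CPair a b) (φ : SR) : Summable fun l => a l * φ l := by
  apply Summable.of_norm; simpa using P.sa φ

lemma CPair.eq_tr {a b : ℝ → ℂ} (P : CPair a b) (ψ : SR) (x : ℝ) :
    ∑' l, a l * (𝓕 ψ) (l - x) = ∑' s, b s * (e2piR x s * ψ s) := by
  have := P.eq (modS x ψ)
  simpa only [four_mod, modS_apply] using this

lemma CPair.eq_mod {a b : ℝ → ℂ} (P : CPair a b) (ψ : SR) (s : ℝ) :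
    ∑' l, a l * (e2piR l (-s) * (𝓕 ψ) l) = ∑' s', b s' * ψ (s' - s) := by
  have := P.eq (trS s ψ)
  simpa only [four_tr, trS_apply] using this

lemma CPair.isol {a b : ℝ → ℂ} (P : CPair a b) (x : ℝ) :
    ∃ r > 0, ∀ y, a y ≠ 0 → |y - x| < r → y = x := by
  obtain ⟨η, h, h2⟩ := P.uda
  by_cases hx : ∃ y0, a y0 ≠ 0 ∧ y0 ≠ x ∧ |y0 - x| < η / 2
  · obtain ⟨y0, h3, h4, h5⟩ := hx
    refine ⟨|y0 - x|, abs_pos.2 (sub_ne_zero.2 h4), fun y hy hyx => ?_⟩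
    exfalso
    have : y = y0 := by
      apply h2 _ _ hy h3
      calc |y - y0| = |(y - x) - (y0 - x)| := by ring_nf
        _ ≤ |y - x| + |y0 - x| := abs_sub _ _
        _ < η := by linarith
    rw [this] at hyx
    exact lt_irrefl _ hyx
  · push Not at hx
    refine ⟨η / 2, by positivity, fun y hy hyx => ?_⟩
    by_contra hne
    exact absurd hyx (not_lt.2 (hx y hy hne))

lemma CPair.bdd {a b : ℝ → ℂ} (P : CPair a b) : ∃ C > 0, ∀ x, ‖a x‖ ≤ C := by
  obtain ⟨η, h, h2⟩ := P.uda
  obtain ⟨u, hu1, hu2, -, -⟩ := exists_bump 0 η h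
  set w : SR := 𝓕⁻ u with hw
  have hwu : 𝓕 w = u := FourierTransform.fourier_fourierInv_eq u
  refine ⟨(∑' s, ‖b s‖ * ‖w s‖) + 1, ?_, ?_⟩
  · have : 0 ≤ ∑' s, ‖b s‖ * ‖w s‖ := tsum_nonneg fun s => by positivity
    linarith
  · intro x
    by_cases hx : a x = 0
    · rw [hx]; simp
      have : 0 ≤ ∑' s, ‖b s‖ * ‖w s‖ := tsum_nonneg fun s => by positivity
      linarith
    have h3 := P.eq_tr w x
    rw [hwu, tsum_eq_single x] at h3
    · rw [sub_self, hu1, mul_one] at h3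
      rw [h3]
      have : ‖∑' s, b s * (e2piR x s * w s)‖ ≤ ∑' s, ‖b s‖ * ‖w s‖ := by
        refine (norm_tsum_le_tsum_norm ?_).trans (le_of_eq ?_)
        · simpa [e2_norm] using P.sb w
        · simp [e2_norm]
      linarith
    · intro y hy
      by_cases hay : a y = 0
      · simp [hay]
      · rw [hu2, mul_zero]
        rw [sub_zero]
        by_contra hlt
        exact hy (h2 _ _ hay hx (not_le.1 hlt))

lemma summable_int_aux : Summable fun j : ℤ => 1 / (1 + (j : ℝ) ^ 2) := by
  have h := Real.summable_one_div_int_pow (p := 2) |>.2 (by norm_num)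
  refine Summable.of_norm_bounded_eventually h ?_
  filter_upwards [(Set.finite_singleton (0:ℤ)).compl_mem_cofinite] with j hj
  have hj0 : (j : ℝ) ≠ 0 := by simpa using hj
  rw [Real.norm_of_nonneg (by positivity)]
  apply one_div_le_one_div_of_le (by positivity) (by linarith)

lemma floor_inj {η : ℝ} (hη : 0 < η) {A : Set ℝ}
    (hA : ∀ x ∈ A, ∀ y ∈ A, |x - y| < η → x = y) (x : ℝ) :
    InjOn (fun l => ⌊(l - x) / η⌋) A := by
  intro l hl l' hl' h
  apply hA l hl l' hl'
  have := Int.abs_sub_lt_one_of_floor_eq_floor h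
  rw [← sub_div, abs_div, abs_of_pos hη, div_lt_one hη] at this
  have e : l - x - (l' - x) = l - l' := by ring
  rwa [e] at this

lemma sum_bound {A : Set ℝ} (hA : ∃ η > (0:ℝ), ∀ x ∈ A, ∀ y ∈ A, |x - y| < η → x = y) :
    ∃ K > 0, ∀ x, ∀ F : Finset ℝ, (∀ l ∈ F, l ∈ A) → ∑ l ∈ F, 1 / (1 + (l - x) ^ 2) ≤ K := by
  obtain ⟨η, hη, hA⟩ := hA
  set K0 := ∑' j : ℤ, 1 / (1 + (j : ℝ) ^ 2)
  have hK0 : 0 ≤ K0 := tsum_nonneg fun j => by positivity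
  refine ⟨(3 + 2 / η ^ 2) * K0 + 1, by positivity, ?_⟩
  intro x F hF
  have h1 : ∀ l ∈ F, 1 / (1 + (l - x) ^ 2) ≤
      (3 + 2 / η ^ 2) * (1 / (1 + ((⌊(l - x) / η⌋ : ℤ) : ℝ) ^ 2)) := by
    intro l _
    set j := ⌊(l - x) / η⌋
    have e1 : (j : ℝ) ≤ (l - x) / η := Int.floor_le _
    have e2 : (l - x) / η < j + 1 := Int.lt_floor_add_one _
    set y := (l - x) / η with hy
    have hly : l - x = y * η := by rw [hy]; field_simp
    have hj : (j:ℝ) ^ 2 ≤ 2 * y ^ 2 + 2 := by nlinarith [sq_nonneg (y + (y - j)), sq_nonneg (y - (y - j))]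
    rw [hly, mul_one_div, div_le_div_iff₀ (by positivity) (by positivity)]
    have : (3 + 2 / η ^ 2) * (1 + (y * η) ^ 2) = 3 + 2 / η ^ 2 + 3 * (y * η) ^ 2 + 2 * y ^ 2 := by
      field_simp; ring
    rw [this]
    have : 0 ≤ 2 / η ^ 2 := by positivity
    nlinarith [sq_nonneg (y * η)]
  calc _ ≤ ∑ l ∈ F, (3 + 2 / η ^ 2) * (1 / (1 + ((⌊(l - x) / η⌋ : ℤ) : ℝ) ^ 2)) := Finset.sum_le_sum h1
    _ = (3 + 2 / η ^ 2) * ∑ l ∈ F, (1 / (1 + ((⌊(l - x) / η⌋ : ℤ) : ℝ) ^ 2)) := by rw [Finset.mul_sum]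
    _ = (3 + 2 / η ^ 2) * ∑ j ∈ F.image (fun l => ⌊(l - x) / η⌋), (1 / (1 + (j : ℝ) ^ 2)) := by
        rw [Finset.sum_image]
        intro p hp q hq hpq
        exact floor_inj hη hA x (hF p hp) (hF q hq) hpq
    _ ≤ (3 + 2 / η ^ 2) * K0 := by
        gcongr
        exact summable_int_aux.sum_le_tsum _ (fun j _ => by positivity)
    _ ≤ _ := by linarith

/-- consequence for series -/
lemma series_bound {A : Set ℝ} {K : ℝ}
    (hK : ∀ x, ∀ F : Finset ℝ, (∀ l ∈ F, l ∈ A) → ∑ l ∈ F, 1 / (1 + (l - x) ^ 2) ≤ K)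
    (g : ℝ → ℝ) (hg0 : ∀ l, 0 ≤ g l) (hgA : ∀ l, l ∉ A → g l = 0) (x M : ℝ) (hM : 0 ≤ M)
    (hg : ∀ l, g l ≤ M * (1 / (1 + (l - x) ^ 2))) : Summable g ∧ ∑' l, g l ≤ M * K := by
  classical
  have key : ∀ F : Finset ℝ, ∑ l ∈ F, g l ≤ M * K := by
    intro F
    have : ∑ l ∈ F, g l = ∑ l ∈ F with l ∈ A, g l := by
      rw [Finset.sum_filter]
      apply Finset.sum_congr rfl
      intro l _
      split_ifs with h
      · rfl
      · exact hgA l h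
    rw [this]
    calc _ ≤ ∑ l ∈ F with l ∈ A, M * (1 / (1 + (l - x) ^ 2)) := Finset.sum_le_sum fun l _ => hg l
      _ ≤ M * K := by
        rw [← Finset.mul_sum]
        gcongr
        apply hK
        intro l hl
        exact (Finset.mem_filter.1 hl).2
  exact ⟨summable_of_sum_le hg0 key, Real.tsum_le_of_sum_le hg0 key⟩

lemma CPair.V_aux {a b : ℝ → ℂ} (P : CPair a b) (ψ : SR)
    (hψ : ∀ s s', b s ≠ 0 → b s' ≠ 0 → ψ (s' - s) = 0) (h : ℝ) (w : SR) :
    ∑' l, a l * (𝓕 ψ) l * (starRingEnd ℂ) (∑' s, b s * (e2piR (l + h) s * w s)) = 0 := by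
  have h1 : ∀ l, a l * (𝓕 ψ) l * (starRingEnd ℂ) (∑' s, b s * (e2piR (l + h) s * w s)) =
      ∑' s, (a l * (𝓕 ψ) l) * ((starRingEnd ℂ) (b s) * (e2piR (l + h) (-s) * (starRingEnd ℂ) (w s))) := by
    intro l
    rw [Complex.conj_tsum, ← tsum_mul_left]
    congr 1; ext s
    simp only [map_mul, e2_conj]
  simp_rw [h1]
  have hsum : Summable (Function.uncurry fun l s =>
      (a l * (𝓕 ψ) l) * ((starRingEnd ℂ) (b s) * (e2piR (l + h) (-s) * (starRingEnd ℂ) (w s)))) := by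
    apply Summable.of_norm
    have := (P.sa (𝓕 ψ)).mul_of_nonneg (P.sb w) (fun _ => by positivity) (fun _ => by positivity)
    convert this using 2 with p
    simp [Function.uncurry, e2_norm]
  rw [← hsum.tsum_comm]
  have h2 : ∀ s, ∑' l, (a l * (𝓕 ψ) l) * ((starRingEnd ℂ) (b s) * (e2piR (l + h) (-s) * (starRingEnd ℂ) (w s))) = 0 := by
    intro s
    by_cases hs : b s = 0
    · simp [hs]
    have h3 := P.eq_mod ψ s
    have h4 : ∑' s', b s' * ψ (s' - s) = 0 := by
      rw [← tsum_zero (β := ℝ)]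
      congr 1; ext s'
      by_cases hs' : b s' = 0
      · simp [hs']
      · rw [hψ s s' hs hs', mul_zero]
    rw [h4] at h3
    have h5 : ∀ l, (a l * (𝓕 ψ) l) * ((starRingEnd ℂ) (b s) * (e2piR (l + h) (-s) * (starRingEnd ℂ) (w s))) =
      ((starRingEnd ℂ) (b s) * (starRingEnd ℂ) (w s) * e2piR h (-s)) * (a l * (e2piR l (-s) * (𝓕 ψ) l)) := by
      intro l; rw [e2_add_left]; ring
    simp_rw [h5]
    rw [tsum_mul_left, h3, mul_zero]
  simp_rw [h2]
  exact tsum_zero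

def cc (a : ℝ → ℂ) (h l : ℝ) : ℂ := a l * (starRingEnd ℂ) (a (l + h))

lemma CPair.approx {a b : ℝ → ℂ} (P : CPair a b) : ∃ C : ℝ, 0 ≤ C ∧ ∃ (g : ℕ → ℝ → ℂ) (w : ℕ → SR),
    (∀ n x, g n x = ∑' s, b s * (e2piR x s * w n s)) ∧ (∀ n x, ‖g n x‖ ≤ C) ∧
    ∀ x, Filter.Tendsto (fun n => g n x) Filter.atTop (nhds (a x)) := by
  obtain ⟨η, hη, h2⟩ := P.uda
  obtain ⟨C, hC, hCa⟩ := P.bdd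
  have hr : ∀ n : ℕ, 0 < η / (2 * (n + 1)) := fun n => by positivity
  choose u hu1 hu2 hu3 _ using fun n : ℕ => exists_bump 0 (η / (2 * (n + 1))) (hr n)
  refine ⟨C, hC.le, fun n x => ∑' l, a l * u n (l - x), fun n => 𝓕⁻ (u n), ?_, ?_, ?_⟩
  · intro n x
    rw [← P.eq_tr, FourierTransform.fourier_fourierInv_eq]
  · intro n x
    beta_reduce
    by_cases hx : ∃ y0, a y0 ≠ 0 ∧ |y0 - x| < η / (2 * (n + 1))
    · obtain ⟨y0, h3, h4⟩ := hx
      rw [tsum_eq_single y0]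
      · rw [norm_mul]
        calc _ ≤ C * 1 := mul_le_mul (hCa _) (hu3 _ _) (norm_nonneg _) hC.le
          _ = C := mul_one C
      · intro y hy
        by_cases hay : a y = 0
        · simp [hay]
        rw [hu2, mul_zero]
        rw [sub_zero]
        by_contra hlt
        push Not at hlt
        apply hy
        apply h2 _ _ hay h3
        have : η / (2 * (n + 1)) ≤ η / 2 := by
          apply div_le_div_of_nonneg_left hη.le (by norm_num)
          have : (0:ℝ) ≤ n := Nat.cast_nonneg n
          linarith
        calc |y - y0| = |(y - x) - (y0 - x)| := by ring_nf
        _ ≤ |y - x| + |y0 - x| := abs_sub _ _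
        _ < η := by linarith
    · push Not at hx
      have : ∑' l, a l * u n (l - x) = 0 := by
        rw [← tsum_zero (β := ℝ)]
        congr 1; ext y
        by_cases hay : a y = 0
        · simp [hay]
        rw [hu2, mul_zero]
        rw [sub_zero]
        exact hx y hay
      rw [this]; simpa using hC.le
  · intro x
    obtain ⟨r, hr0, hr1⟩ := P.isol x
    apply tendsto_const_nhds.congr'
    obtain ⟨N, hN⟩ := exists_nat_gt (η / r)
    filter_upwards [Filter.eventually_ge_atTop N] with n hn
    rw [tsum_eq_single x]
    · rw [sub_self, hu1, mul_one]
    · intro y hy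
      by_cases hay : a y = 0
      · simp [hay]
      rw [hu2, mul_zero]
      rw [sub_zero]
      have : r ≤ |y - x| := by
        by_contra hlt
        exact hy (hr1 y hay (not_le.1 hlt))
      refine le_trans ?_ this
      have hn' : (N:ℝ) ≤ n := by exact_mod_cast hn
      rw [div_lt_iff₀ hr0] at hN
      rw [div_le_iff₀ (by positivity)]
      nlinarith

lemma CPair.V {a b : ℝ → ℂ} (P : CPair a b) (ψ : SR)
    (hψ : ∀ s s', b s ≠ 0 → b s' ≠ 0 → ψ (s' - s) = 0) (h : ℝ) :
    ∑' l, cc a h l * (𝓕 ψ) l = 0 := by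
  obtain ⟨C, hC, g, w, hgw, hgb, hgt⟩ := P.approx
  have hz : ∀ n, ∑' l, a l * (𝓕 ψ) l * (starRingEnd ℂ) (g n (l + h)) = 0 := by
    intro n
    simp_rw [hgw]
    exact P.V_aux ψ hψ h _
  have hA : ∀ l, Filter.Tendsto (fun n => a l * (𝓕 ψ) l * (starRingEnd ℂ) (g n (l + h)))
      Filter.atTop (nhds (cc a h l * (𝓕 ψ) l)) := by
    intro l
    have e : cc a h l * (𝓕 ψ) l = a l * (𝓕 ψ) l * (starRingEnd ℂ) (a (l + h)) := by
      unfold cc; ring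
    rw [e]
    apply Filter.Tendsto.mul tendsto_const_nhds
    exact (Complex.continuous_conj.tendsto _).comp (hgt (l + h))
  have hB : ∀ n l, ‖a l * (𝓕 ψ) l * (starRingEnd ℂ) (g n (l + h))‖ ≤ ‖a l‖ * ‖(𝓕 ψ) l‖ * C := by
    intro n l
    rw [norm_mul, norm_mul, RCLike.norm_conj]
    exact mul_le_mul_of_nonneg_left (hgb _ _) (by positivity)
  have hlim : Filter.Tendsto (fun n => ∑' l, a l * (𝓕 ψ) l * (starRingEnd ℂ) (g n (l + h)))
      Filter.atTop (nhds (∑' l, cc a h l * (𝓕 ψ) l)) :=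
    tendsto_tsum_of_dominated_convergence ((P.sa (𝓕 ψ)).mul_right C) hA
      (Filter.Eventually.of_forall hB)
  simp_rw [hz] at hlim
  exact tendsto_nhds_unique hlim tendsto_const_nhds

lemma CPair.V' {a b : ℝ → ℂ} (P : CPair a b) (ψ : SR)
    (hψ : ∀ s s', b s ≠ 0 → b s' ≠ 0 → ψ (s' - s) = 0) (h x : ℝ) :
    ∑' l, cc a h l * (𝓕 ψ) (l - x) = 0 := by
  have := P.V (modS x ψ) (fun s s' hs hs' => by rw [modS_apply, hψ s s' hs hs', mul_zero]) h
  simpa only [four_mod] using this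


def KK (G : ℝ → ℂ) (σ τ : ℝ) (P : ℝ → ℂ) : Prop :=
  (∃ B, ∀ y, ‖P y‖ ≤ B) ∧ ∀ s, 0 ≤ s → s + τ ≤ σ → ∑' y, G y * (P y * e2piR y s) = 0

lemma summable_GP {G P : ℝ → ℂ} (hG : Summable fun y => ‖G y‖) {B : ℝ} (hP : ∀ y, ‖P y‖ ≤ B) :
    Summable fun y => G y * P y := by
  apply Summable.of_norm
  refine Summable.of_nonneg_of_le (fun _ => norm_nonneg _) (fun y => ?_) (hG.mul_right B)
  rw [norm_mul]
  exact mul_le_mul_of_nonneg_left (hP y) (norm_nonneg _)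

lemma KK.fac {G : ℝ → ℂ} (hG : Summable fun y => ‖G y‖) {σ τ : ℝ} {P : ℝ → ℂ}
    (h : KK G σ τ P) (t : ℝ) (ht : 0 ≤ t) (z : ℂ) :
    KK G σ (τ + t) (fun y => (e2piR y t - z) * P y) := by
  obtain ⟨⟨B, hB⟩, h2⟩ := h
  have hB0 : 0 ≤ B := (norm_nonneg _).trans (hB 0)
  refine ⟨⟨(1 + ‖z‖) * B, fun y => ?_⟩, ?_⟩
  · rw [norm_mul]
    apply mul_le_mul _ (hB y) (norm_nonneg _) (by positivity)
    refine (norm_sub_le _ _).trans ?_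
    rw [e2_norm]
  · intro s hs hst
    have e : ∀ y, G y * ((e2piR y t - z) * P y * e2piR y s) =
        G y * (P y * e2piR y (s + t)) - z * (G y * (P y * e2piR y s)) := by
      intro y; rw [e2_add_right]; ring
    simp_rw [e]
    have hsum : ∀ s, Summable fun y => G y * (P y * e2piR y s) := fun s => by
      apply summable_GP hG (B := B)
      intro y; rw [norm_mul, e2_norm, mul_one]; exact hB y
    rw [Summable.tsum_sub (hsum _) ((hsum _).mul_left z), tsum_mul_left, h2 (s + t) (by linarith) (by linarith),
      h2 s hs (by linarith)]
    simp

def EE (t y : ℝ) : ℂ := (1 / t : ℂ) * ∫ r in (0:ℝ)..t, e2piR y r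

lemma e2_cont (y : ℝ) : Continuous (fun r => e2piR y r) := by
  unfold e2piR; fun_prop

lemma EE_le_one (t y : ℝ) (ht : 0 < t) : ‖EE t y‖ ≤ 1 := by
  unfold EE
  rw [norm_mul]
  have : ‖∫ r in (0:ℝ)..t, e2piR y r‖ ≤ 1 * |t - 0| :=
    intervalIntegral.norm_integral_le_of_norm_le_const fun r _ => (e2_norm y r).le
  rw [sub_zero, abs_of_pos ht, one_mul] at this
  rw [norm_div, Complex.norm_real, Real.norm_of_nonneg ht.le, norm_one, one_div, inv_mul_le_iff₀ ht]
  linarith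

lemma EE_zero (t : ℝ) (ht : 0 < t) : EE t 0 = 1 := by
  unfold EE
  simp only [e2_zero_left]
  have : (t : ℂ) ≠ 0 := by exact_mod_cast ht.ne'
  simp [this]

lemma EE_decay (t y : ℝ) (ht : 0 < t) (hy : y ≠ 0) : ‖EE t y‖ ≤ 1 / (t * |y|) := by
  unfold EE
  have hc : ((2 * Real.pi * y : ℝ) : ℂ) * Complex.I ≠ 0 := by
    apply mul_ne_zero _ Complex.I_ne_zero
    have : 2 * Real.pi * y ≠ 0 := by positivity
    exact_mod_cast this
  have h1 : (∫ r in (0:ℝ)..t, e2piR y r) = (e2piR y t - 1) / (((2 * Real.pi * y : ℝ) : ℂ) * Complex.I) := by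
    have h2 := integral_exp_mul_complex (a := 0) (b := t) hc
    have e : ∀ r : ℝ, e2piR y r = Complex.exp (((2 * Real.pi * y : ℝ) : ℂ) * Complex.I * r) := by
      intro r; unfold e2piR; congr 1; push_cast; ring
    simp_rw [e]
    rw [h2]
    simp
  rw [h1, norm_mul, norm_div, norm_div, norm_mul, Complex.norm_I, mul_one, Complex.norm_real, Complex.norm_real,
    Real.norm_of_nonneg ht.le, norm_one]
  have h3 : ‖e2piR y t - 1‖ ≤ 2 := by
    refine (norm_sub_le _ _).trans ?_
    rw [e2_norm, norm_one]; norm_num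
  have h4 : |2 * Real.pi * y| = 2 * Real.pi * |y| := by
    rw [abs_mul, abs_of_pos (by positivity : 0 < 2 * Real.pi)]
  rw [Real.norm_eq_abs, h4]
  have hy' : 0 < |y| := abs_pos.2 hy
  have hpi := Real.pi_gt_three
  calc 1 / t * (‖e2piR y t - 1‖ / (2 * Real.pi * |y|)) ≤ 1 / t * (2 / (2 * 1 * |y|)) := by
        gcongr; linarith
    _ = 1 / (t * |y|) := by field_simp

lemma KK.int {G : ℝ → ℂ} (hG : Summable fun y => ‖G y‖) {σ τ : ℝ} {P : ℝ → ℂ}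
    (h : KK G σ τ P) (t : ℝ) (ht : 0 < t) :
    KK G σ (τ + t) (fun y => EE t y * P y) := by
  obtain ⟨⟨B, hB⟩, h2⟩ := h
  have hB0 : 0 ≤ B := (norm_nonneg _).trans (hB 0)
  refine ⟨⟨B, fun y => ?_⟩, ?_⟩
  · rw [norm_mul]
    calc _ ≤ 1 * B := mul_le_mul (EE_le_one t y ht) (hB y) (norm_nonneg _) zero_le_one
      _ = B := one_mul B
  · intro s hs hst
    set A := Function.support (fun y => ‖G y‖) with hA
    have hcount : Countable A := hG.countable_support
    have hsub : ∀ (H : ℝ → ℂ), ∑' y : A, G y * H y = ∑' y, G y * H y := by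
      intro H
      apply tsum_subtype_eq_of_support_subset (f := fun y => G y * H y)
      intro y hy
      simp only [Function.mem_support, hA] at *
      intro h0; apply hy
      rw [norm_eq_zero] at h0; rw [h0, zero_mul]
    rw [← hsub]
    have e : ∀ y : ℝ, G y * (EE t y * P y * e2piR y s) =
        (1 / t : ℂ) * ∫ r in (0:ℝ)..t, G y * (P y * e2piR y (s + r)) := by
      intro y
      unfold EE
      have : ∀ r, G y * (P y * e2piR y (s + r)) = (G y * (P y * e2piR y s)) * e2piR y r := by
        intro r; rw [e2_add_right]; ring
      simp_rw [this]
      rw [intervalIntegral.integral_const_mul]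
      ring
    simp_rw [e]
    rw [tsum_mul_left]
    have hsum : Summable fun y : A => ‖G y‖ * B := (hG.mul_right B).subtype A
    have key := intervalIntegral.hasSum_integral_of_dominated_convergence (ι := A) (a := 0) (b := t) (μ := volume)
      (F := fun (y : A) (r : ℝ) => G y * (P y * e2piR y (s + r)))
      (f := fun r => ∑' y : A, G y * (P y * e2piR y (s + r)))
      (fun y _ => ‖G y‖ * B)
      (fun y => by
        apply Continuous.aestronglyMeasurable
        have := e2_cont (y : ℝ)
        fun_prop)
      (fun y => by
        filter_upwards with r _
        rw [norm_mul, norm_mul, e2_norm, mul_one]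
        exact mul_le_mul_of_nonneg_left (hB _) (norm_nonneg _))
      (by filter_upwards with r _; exact hsum)
      (by simp)
      (by
        filter_upwards with r _
        apply Summable.hasSum
        apply Summable.of_norm_bounded hsum
        intro y
        rw [norm_mul, norm_mul, e2_norm, mul_one]
        exact mul_le_mul_of_nonneg_left (hB _) (norm_nonneg _))
    rw [key.tsum_eq]
    have : ∫ r in (0:ℝ)..t, (∑' y : A, G y * (P y * e2piR y (s + r))) = 0 := by
      have h0 : ∫ r in (0:ℝ)..t, (0:ℂ) = 0 := by simp
      refine Eq.trans ?_ h0
      apply intervalIntegral.integral_congr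
      intro r hr
      rw [uIcc_of_le ht.le] at hr
      change (∑' y : A, G y * (P y * e2piR y (s + r))) = 0
      rw [hsub (fun y => P y * e2piR y (s + r))]
      exact h2 (s + r) (by linarith [hr.1]) (by linarith [hr.2])
    rw [this, mul_zero]

lemma KK.intpow {G : ℝ → ℂ} (hG : Summable fun y => ‖G y‖) {σ τ : ℝ} {P : ℝ → ℂ}
    (h : KK G σ τ P) (t : ℝ) (ht : 0 < t) (m : ℕ) :
    KK G σ (τ + m * t) (fun y => EE t y ^ m * P y) := by
  induction m with
  | zero => simpa using h
  | succ m ih =>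
    have := ih.int hG t ht
    have e1 : τ + ((m + 1 : ℕ) : ℝ) * t = τ + m * t + t := by push_cast; ring
    have e2 : (fun y => EE t y ^ (m + 1) * P y) = fun y => EE t y * (EE t y ^ m * P y) := by
      ext y; ring
    rw [e1, e2]; exact this

lemma KK.prodF {G : ℝ → ℂ} (hG : Summable fun y => ‖G y‖) {σ : ℝ}
    (h : ∀ s, 0 ≤ s → s ≤ σ → ∑' y, G y * e2piR y s = 0) (F : Finset ℝ) (t : ℝ → ℝ)
    (ht : ∀ k ∈ F, 0 ≤ t k) :
    KK G σ (∑ k ∈ F, t k) (fun y => ∏ k ∈ F, (e2piR y (t k) - e2piR k (t k))) := by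
  classical
  induction F using Finset.induction_on with
  | empty =>
    refine ⟨⟨1, by simp⟩, ?_⟩
    intro s hs hs2
    simp at *
    exact h s hs hs2
  | insert x F hx ih =>
    have := (ih (fun k hk => ht k (Finset.mem_insert_of_mem hk))).fac hG (t x) (ht x (Finset.mem_insert_self _ _)) (e2piR x (t x))
    convert this using 2
    · rw [Finset.sum_insert hx, add_comm]
    · rw [Finset.prod_insert hx]

lemma fact_prod (n : ℕ) (J : Finset ℕ) (hJ : ∀ j ∈ J, 1 ≤ j) (hn : J.card ≤ n) :
    J.card.factorial ≤ ∏ j ∈ J, min j n := by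
  induction J using Finset.induction_on_max with
  | empty => simp
  | insert x J hx ih =>
    have hxJ : x ∉ J := fun h => lt_irrefl _ (hx x h)
    rw [Finset.card_insert_of_notMem hxJ] at hn ⊢
    rw [Finset.prod_insert hxJ, Nat.factorial_succ]
    apply Nat.mul_le_mul _ (ih (fun j hj => hJ j (Finset.mem_insert_of_mem hj)) (by omega))
    apply le_min _ hn
    have hsub : insert x J ⊆ Finset.Icc 1 x := by
      intro j hj
      rw [Finset.mem_Icc]
      refine ⟨hJ j hj, ?_⟩
      rcases Finset.mem_insert.1 hj with h | h
      · exact h.le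
      · exact (hx j h).le
    have := Finset.card_le_card hsub
    rw [Finset.card_insert_of_notMem hxJ] at this
    simpa using this

lemma fac_lower (y t : ℝ) (ht : 0 ≤ t) (h : |y| * t ≤ 1 / 2) : 4 * (|y| * t) ≤ ‖1 - e2piR y t‖ := by
  have h1 : ‖1 - e2piR y t‖ = ‖2 * Real.sin (Real.pi * (y * t))‖ := by
    rw [norm_sub_rev]
    have := Complex.norm_exp_I_mul_ofReal_sub_one (2 * Real.pi * (y * t))
    rw [mul_comm Complex.I] at this
    unfold e2piR
    rw [this]; congr 3; ring
  rw [h1, norm_mul, Real.norm_of_nonneg (by norm_num : (0:ℝ) ≤ 2), Real.norm_eq_abs]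
  have h2 : |Real.sin (Real.pi * (y * t))| = |Real.sin (Real.pi * (|y| * t))| := by
    rcases abs_cases y with ⟨h, _⟩ | ⟨h, _⟩ <;> rw [h]
    rw [neg_mul, mul_neg, Real.sin_neg, abs_neg]
  rw [h2]
  have hnn : 0 ≤ |y| * t := by positivity
  have h3 := Real.mul_le_sin (x := Real.pi * (|y| * t)) (by positivity) (by nlinarith [Real.pi_pos])
  have h4 : 2 / Real.pi * (Real.pi * (|y| * t)) = 2 * (|y| * t) := by
    have := Real.pi_ne_zero; field_simp
  rw [h4] at h3
  have := le_abs_self (Real.sin (Real.pi * (|y| * t)))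
  linarith


def iot (η y : ℝ) : ℕ := (if 0 < ⌊y / η⌋ then 2 * ⌊y / η⌋ else -2 * ⌊y / η⌋ - 1).toNat

lemma iot_prop {η y : ℝ} (hη : 0 < η) (hy : η ≤ |y|) :
    1 ≤ iot η y ∧ η * iot η y / 4 ≤ |y| ∧
      ((iot η y : ℕ) : ℤ) = (if 0 < ⌊y / η⌋ then 2 * ⌊y / η⌋ else -2 * ⌊y / η⌋ - 1) := by
  rcases le_or_gt 0 y with h | h
  · rw [abs_of_nonneg h] at hy ⊢
    have h1 : 1 ≤ ⌊y / η⌋ := by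
      rw [Int.le_floor]; push_cast; rw [le_div_iff₀ hη]; linarith
    have h2 : ((iot η y : ℕ) : ℤ) = 2 * ⌊y / η⌋ := by
      unfold iot; rw [if_pos (by omega)]; omega
    have h3 : ((iot η y : ℕ) : ℝ) = 2 * ⌊y / η⌋ := by exact_mod_cast h2
    refine ⟨by omega, ?_, by rw [if_pos (by omega)]; exact h2⟩
    have h4 := Int.floor_le (y / η)
    rw [le_div_iff₀ hη] at h4
    rw [h3]; nlinarith
  · rw [abs_of_neg h] at hy ⊢
    have h1 : ⌊y / η⌋ ≤ -1 := by
      have : ⌊y / η⌋ < 0 := by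
        rw [Int.floor_lt]; push_cast; exact div_neg_of_neg_of_pos h hη
      omega
    have h2 : ((iot η y : ℕ) : ℤ) = -2 * ⌊y / η⌋ - 1 := by
      unfold iot; rw [if_neg (by omega)]; omega
    have h3 : ((iot η y : ℕ) : ℝ) = -2 * ⌊y / η⌋ - 1 := by exact_mod_cast h2
    refine ⟨by omega, ?_, by rw [if_neg (by omega)]; exact h2⟩
    have h4 := Int.lt_floor_add_one (y / η)
    rw [div_lt_iff₀ hη] at h4
    rw [h3]
    rcases eq_or_lt_of_le h1 with h5 | h5
    · rw [h5]; push_cast; linarith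
    · have : (⌊y / η⌋ : ℝ) ≤ -2 := by exact_mod_cast (by omega : ⌊y / η⌋ ≤ -2)
      nlinarith

lemma dm_aux {ρ r n c i : ℝ} (hn : 0 < n) (hc : 0 ≤ c) (hr : 0 ≤ r) (h1 : ρ ≤ r) (h2 : c ≤ i) :
    ρ / n * c ≤ r / n * i := by
  apply mul_le_mul _ h2 hc (by positivity)
  exact div_le_div_of_nonneg_right h1 hn.le

lemma prod_lower {η σ : ℝ} (hη : 0 < η) (hσ : 0 < σ) (F : Finset ℝ)
    (hsep : ∀ x ∈ F, ∀ y ∈ F, |x - y| < η → x = y) (h0 : ∀ x ∈ F, η ≤ |x|) :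
    (min (σ * η / 2) 1 / 3) ^ F.card ≤
      ∏ k ∈ F, ‖1 - e2piR k (min (σ / (2 * F.card)) (1 / (2 * |k|)))‖ := by
  rcases F.eq_empty_or_nonempty with hF | hF
  · simp [hF]
  set n := F.card with hn
  have hn0 : 0 < n := hF.card_pos
  have hn0' : (0:ℝ) < n := by exact_mod_cast hn0
  set ρ := min (σ * η / 2) 1 with hρ
  have hρ0 : 0 < ρ := lt_min (by positivity) one_pos
  have hρ1 : ρ ≤ 1 := min_le_right _ _
  have hρ2 : ρ ≤ σ * η / 2 := min_le_left _ _
  have hinj : Set.InjOn (iot η) (F : Set ℝ) := by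
    intro x hx y hy hxy
    have h1 := (iot_prop hη (h0 x hx)).2.2
    have h2 := (iot_prop hη (h0 y hy)).2.2
    have h3 : ⌊x / η⌋ = ⌊y / η⌋ := by
      rw [hxy] at h1
      rw [h1] at h2
      split_ifs at h2 <;> omega
    have := floor_inj hη (A := (F : Set ℝ)) (fun x hx y hy => hsep x hx y hy) 0 hx hy
    simp only [sub_zero] at this
    exact this h3
  have hfp : n.factorial ≤ ∏ k ∈ F, min (iot η k) n := by
    have := fact_prod n (F.image (iot η)) (by
      intro j hj
      obtain ⟨x, hx, rfl⟩ := Finset.mem_image.1 hj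
      exact (iot_prop hη (h0 x hx)).1) (by rw [Finset.card_image_of_injOn hinj])
    rw [Finset.card_image_of_injOn hinj, Finset.prod_image hinj] at this
    exact this
  have hfac : ∀ k ∈ F, ρ / n * ((min (iot η k) n : ℕ) : ℝ) ≤
      ‖1 - e2piR k (min (σ / (2 * n)) (1 / (2 * |k|)))‖ := by
    intro k hk
    obtain ⟨h1, h2, -⟩ := iot_prop hη (h0 k hk)
    have hk0 : 0 < |k| := hη.trans_le (h0 k hk)
    set t := min (σ / (2 * n)) (1 / (2 * |k|)) with ht
    have ht0 : 0 ≤ t := le_min (by positivity) (by positivity)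
    have h3 := fac_lower k t ht0 (by
      calc |k| * t ≤ |k| * (1 / (2 * |k|)) := by gcongr; exact min_le_right _ _
        _ = 1 / 2 := by field_simp)
    refine le_trans ?_ h3
    have h4 : ((min (iot η k) n : ℕ) : ℝ) ≤ iot η k := by exact_mod_cast min_le_left _ _
    have h5 : ((min (iot η k) n : ℕ) : ℝ) ≤ n := by exact_mod_cast min_le_right _ _
    rcases min_choice (σ / (2 * n)) (1 / (2 * |k|)) with h | h
    · rw [ht, h]
      calc ρ / n * ((min (iot η k) n : ℕ) : ℝ) ≤ (σ * η / 2) / n * (iot η k) :=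
            dm_aux hn0' (Nat.cast_nonneg _) (by positivity) hρ2 h4
        _ = 2 * σ / n * (η * iot η k / 4) := by ring
        _ ≤ 2 * σ / n * |k| := mul_le_mul_of_nonneg_left h2
            (div_nonneg (mul_nonneg zero_le_two hσ.le) hn0'.le)
        _ = _ := by ring
    · rw [ht, h]
      calc ρ / n * ((min (iot η k) n : ℕ) : ℝ) ≤ 1 / n * n :=
            dm_aux hn0' (Nat.cast_nonneg _) zero_le_one hρ1 h5
        _ = 1 := one_div_mul_cancel hn0'.ne'
        _ ≤ 4 * (|k| * (1 / (2 * |k|))) := by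
          have : 4 * (|k| * (1 / (2 * |k|))) = 2 * (|k| * |k|⁻¹) := by ring
          rw [mul_inv_cancel₀ hk0.ne'] at this
          rw [this]; norm_num
  refine le_trans ?_ (Finset.prod_le_prod (fun k _ => by positivity) hfac)
  rw [Finset.prod_mul_distrib, Finset.prod_const, ← hn]
  have h6 : (n.factorial : ℝ) ≤ ∏ k ∈ F, ((min (iot η k) n : ℕ) : ℝ) := by exact_mod_cast hfp
  refine le_trans ?_ (mul_le_mul_of_nonneg_left h6 (by positivity))
  have h7 := Real.pow_div_factorial_le_exp (x := (n:ℝ)) hn0'.le n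
  have h8 : Real.exp n ≤ 3 ^ n := by
    rw [← mul_one (n:ℝ), Real.exp_nat_mul]
    have := Real.exp_one_lt_d9
    exact pow_le_pow_left₀ (Real.exp_pos _).le (by linarith) n
  have h9 : (n:ℝ) ^ n ≤ 3 ^ n * n.factorial := by
    rw [div_le_iff₀ (by positivity)] at h7
    exact h7.trans (by gcongr)
  rw [div_pow, div_pow, div_mul_eq_mul_div, div_le_div_iff₀ (by positivity) (by positivity)]
  rw [mul_assoc]
  gcongr
  linarith

lemma dens_one {η σ : ℝ} (hη : 0 < η) (hσ : 0 < σ) (G : ℝ → ℂ) (hG : Summable fun y => ‖G y‖)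
    (hG0 : G 0 ≠ 0) (hsep : ∀ x y, G x ≠ 0 → G y ≠ 0 → |x - y| < η → x = y)
    (hv : ∀ s, 0 ≤ s → s ≤ σ → ∑' y, G y * e2piR y s = 0) (N : ℝ) (hN : 0 < N) (m : ℕ) (hm : 1 ≤ m)
    (hmN : m ≤ σ * N / 4) (F : Finset ℝ) (hF : ∀ y, G y ≠ 0 → |y| ≤ N → y ∈ F) :
    ‖G 0‖ * 2 ^ m ≤ (∑' y, ‖G y‖) * (6 / min (σ * η / 2) 1) ^ F.card := by
  classical
  have hm0 : (0:ℝ) < m := by exact_mod_cast hm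
  set F' := F.filter (fun y => G y ≠ 0 ∧ y ≠ 0 ∧ |y| ≤ N) with hF'
  have hF'm : ∀ y ∈ F', G y ≠ 0 ∧ y ≠ 0 ∧ |y| ≤ N := fun y hy => (Finset.mem_filter.1 hy).2
  have hfar : ∀ y, G y ≠ 0 → y ≠ 0 → η ≤ |y| := by
    intro y hy hy0
    by_contra hcon
    apply hy0
    apply hsep y 0 hy hG0
    rw [sub_zero]; linarith
  set n := F'.card with hn
  set T : ℝ → ℝ := fun k => min (σ / (2 * n)) (1 / (2 * |k|)) with hT
  have hpl := prod_lower hη hσ F' (fun x hx y hy => hsep x y (hF'm x hx).1 (hF'm y hy).1)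
    (fun x hx => hfar x (hF'm x hx).1 (hF'm x hx).2.1)
  rw [← hn] at hpl
  set ρ := min (σ * η / 2) 1 with hρ
  have hρ0 : 0 < ρ := lt_min (by positivity) one_pos
  have hρ1 : ρ ≤ 1 := min_le_right _ _
  set t := σ / (2 * m) with ht
  have ht0 : 0 < t := by positivity
  have hK := (KK.prodF hG hv F' T (fun k hk => le_min (by positivity) (by positivity))).intpow hG t ht0 m
  obtain ⟨⟨B, hB⟩, hz⟩ := hK
  set Q : ℝ → ℂ := fun y => EE t y ^ m * ∏ k ∈ F', (e2piR y (T k) - e2piR k (T k)) with hQ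
  have hTs : ∑ k ∈ F', T k ≤ σ / 2 := by
    calc ∑ k ∈ F', T k ≤ ∑ k ∈ F', σ / (2 * n) := Finset.sum_le_sum fun k _ => min_le_left _ _
      _ = n * (σ / (2 * n)) := by rw [Finset.sum_const, nsmul_eq_mul]
      _ ≤ σ / 2 := by
        rcases Nat.eq_zero_or_pos n with h | h
        · rw [h]; simp; positivity
        · have : (n:ℝ) ≠ 0 := by positivity
          apply le_of_eq; field_simp
  have hzero : ∑' y, G y * Q y = 0 := by
    have h1 := hz 0 le_rfl (by
      have : m * t = σ / 2 := by rw [ht]; field_simp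
      linarith)
    simpa [e2_zero_right] using h1
  have hsumQ : Summable fun y => G y * Q y := summable_GP hG hB
  rw [hsumQ.tsum_eq_add_tsum_ite 0] at hzero
  set c : ℝ := 2 ^ n * (1 / 2) ^ m with hc
  have hbd : ∀ y, ‖(if y = 0 then 0 else G y * Q y)‖ ≤ ‖G y‖ * c := by
    intro y
    split_ifs with hy0
    · rw [norm_zero]; positivity
    by_cases hGy : G y = 0
    · rw [hGy]; simp
    rw [norm_mul]
    apply mul_le_mul_of_nonneg_left _ (norm_nonneg _)
    by_cases hyN : |y| ≤ N
    · have : y ∈ F' := Finset.mem_filter.2 ⟨hF y hGy hyN, hGy, hy0, hyN⟩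
      have : Q y = 0 := by
        rw [hQ]; simp only
        rw [Finset.prod_eq_zero this (by simp), mul_zero]
      rw [this, norm_zero]; positivity
    · push Not at hyN
      rw [hQ]; simp only
      rw [norm_mul, norm_pow, norm_prod, hc, mul_comm]
      apply mul_le_mul
      · rw [hn, ← Finset.prod_const]
        apply Finset.prod_le_prod (fun _ _ => norm_nonneg _)
        intro k _
        refine (norm_sub_le _ _).trans ?_
        rw [e2_norm, e2_norm]; norm_num
      · apply pow_le_pow_left₀ (norm_nonneg _)
        refine (EE_decay t y ht0 hy0).trans ?_
        apply one_div_le_one_div_of_le (by norm_num)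
        calc (2:ℝ) ≤ t * N := by
              rw [ht, div_mul_eq_mul_div, le_div_iff₀ (by positivity)]; linarith
          _ ≤ t * |y| := by gcongr
      · positivity
      · positivity
  have h1 : ‖G 0 * Q 0‖ ≤ (∑' y, ‖G y‖) * c := by
    rw [eq_neg_of_add_eq_zero_left hzero, norm_neg]
    apply tsum_of_norm_bounded _ hbd
    exact hG.hasSum.mul_right c
  have h2 : (ρ / 3) ^ n ≤ ‖Q 0‖ := by
    refine hpl.trans (le_of_eq ?_)
    rw [hQ]; simp only
    rw [EE_zero t ht0, one_pow, one_mul, norm_prod]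
    simp only [e2_zero_left]; rfl
  have h3 : ‖G 0‖ * (ρ / 3) ^ n ≤ (∑' y, ‖G y‖) * c := by
    rw [norm_mul] at h1
    exact (mul_le_mul_of_nonneg_left h2 (norm_nonneg _)).trans h1
  have hS0 : 0 ≤ ∑' y, ‖G y‖ := tsum_nonneg fun _ => norm_nonneg _
  have h4 : ‖G 0‖ * 2 ^ m ≤ (∑' y, ‖G y‖) * (6 / ρ) ^ n := by
    have e : (6 / ρ) ^ n = 2 ^ n * (3 / ρ) ^ n := by rw [← mul_pow]; congr 1; ring
    have e2 : (ρ / 3) ^ n * (3 / ρ) ^ n = 1 := by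
      rw [← mul_pow]
      have : ρ / 3 * (3 / ρ) = 1 := by field_simp
      rw [this, one_pow]
    have e3 : (1 / 2 : ℝ) ^ m * 2 ^ m = 1 := by rw [← mul_pow]; norm_num
    have := mul_le_mul_of_nonneg_right h3 (by positivity : 0 ≤ (3 / ρ) ^ n * 2 ^ m)
    calc ‖G 0‖ * 2 ^ m = ‖G 0‖ * 2 ^ m * ((ρ / 3) ^ n * (3 / ρ) ^ n) := by rw [e2, mul_one]
      _ = ‖G 0‖ * (ρ / 3) ^ n * ((3 / ρ) ^ n * 2 ^ m) := by ring
      _ ≤ _ := this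
      _ = (∑' y, ‖G y‖) * (2 ^ n * (3 / ρ) ^ n) * ((1 / 2) ^ m * 2 ^ m) := by rw [hc]; ring
      _ = _ := by rw [e3, e, mul_one]
  refine h4.trans ?_
  apply mul_le_mul_of_nonneg_left _ hS0
  apply pow_le_pow_right₀
  · rw [le_div_iff₀ hρ0]; linarith
  · exact Finset.card_le_card (Finset.filter_subset _ _)

lemma dens {η σ : ℝ} (hη : 0 < η) (hσ : 0 < σ) : ∃ κ > 0, ∀ (G : ℝ → ℂ), (Summable fun y => ‖G y‖) →
    G 0 ≠ 0 → (∀ x y, G x ≠ 0 → G y ≠ 0 → |x - y| < η → x = y) →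
    (∀ s, 0 ≤ s → s ≤ σ → ∑' y, G y * e2piR y s = 0) →
    ∃ N0 : ℝ, ∀ N ≥ N0, ∀ F : Finset ℝ, (∀ y, G y ≠ 0 → |y| ≤ N → y ∈ F) → κ * N ≤ F.card := by
  set ρ := min (σ * η / 2) 1 with hρ
  have hρ0 : 0 < ρ := lt_min (by positivity) one_pos
  have hρ1 : ρ ≤ 1 := min_le_right _ _
  have hlr : 0 < Real.log (6 / ρ) := by
    apply Real.log_pos
    rw [lt_div_iff₀ hρ0]; linarith
  have hl2 : 0 < Real.log 2 := Real.log_pos (by norm_num)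
  refine ⟨σ * Real.log 2 / (8 * Real.log (6 / ρ)), by positivity, ?_⟩
  intro G hG hG0 hsep hv
  set L := Real.log (∑' y, ‖G y‖) - Real.log ‖G 0‖ with hL
  refine ⟨max (max 1 (4 / σ)) (8 * (Real.log 2 + L) / (σ * Real.log 2)), ?_⟩
  intro N hN F hF
  have hN1 : 1 ≤ N := (le_max_left _ _).trans ((le_max_left _ _).trans hN)
  have hN2 : 4 / σ ≤ N := (le_max_right _ _).trans ((le_max_left _ _).trans hN)
  have hN3 : 8 * (Real.log 2 + L) / (σ * Real.log 2) ≤ N := (le_max_right _ _).trans hN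
  rw [div_le_iff₀ hσ] at hN2
  rw [div_le_iff₀ (by positivity)] at hN3
  have hfl := Nat.floor_le (a := σ * N / 4) (by positivity)
  have hfl2 := Nat.lt_floor_add_one (σ * N / 4)
  have h := dens_one hη hσ G hG hG0 hsep hv N (by linarith) ⌊σ * N / 4⌋₊
    (by rw [Nat.one_le_floor_iff]; linarith) hfl F hF
  rw [← hρ] at h
  have hg0 : 0 < ‖G 0‖ := norm_pos_iff.2 hG0
  have hS : 0 < ∑' y, ‖G y‖ := lt_of_lt_of_le hg0 (hG.le_tsum 0 fun _ _ => norm_nonneg _)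
  have h2 := Real.log_le_log (by positivity) h
  rw [Real.log_mul hg0.ne' (by positivity), Real.log_mul hS.ne' (by positivity), Real.log_pow, Real.log_pow] at h2
  rw [div_mul_eq_mul_div, div_le_iff₀ (by positivity)]
  nlinarith


lemma cc_ne {a : ℝ → ℂ} {h l : ℝ} : cc a h l ≠ 0 ↔ a l ≠ 0 ∧ a (l + h) ≠ 0 := by
  unfold cc
  simp [not_or]

lemma card_sep {η T x : ℝ} (hη : 0 < η) (hT : 0 ≤ T) (F : Finset ℝ)
    (hsep : ∀ x ∈ F, ∀ y ∈ F, |x - y| < η → x = y) (hF : ∀ l ∈ F, |l - x| ≤ T) :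
    (F.card : ℝ) ≤ 2 * T / η + 1 := by
  classical
  have hinj := floor_inj hη (A := (F : Set ℝ)) (fun x hx y hy => hsep x hx y hy) (x - T)
  have hsub : F.image (fun l => ⌊(l - (x - T)) / η⌋) ⊆ Finset.Icc 0 ⌊2 * T / η⌋ := by
    intro j hj
    obtain ⟨l, hl, rfl⟩ := Finset.mem_image.1 hj
    have := abs_le.1 (hF l hl)
    rw [Finset.mem_Icc]
    constructor
    · apply Int.floor_nonneg.2
      apply div_nonneg _ hη.le; linarith
    · apply Int.floor_le_floor
      apply div_le_div_of_nonneg_right _ hη.le; linarith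
  have h1 := Finset.card_le_card hsub
  rw [Finset.card_image_of_injOn hinj, Int.card_Icc] at h1
  have h2 : (0:ℤ) ≤ ⌊2 * T / η⌋ := Int.floor_nonneg.2 (by positivity)
  have h3 : (F.card : ℤ) ≤ ⌊2 * T / η⌋ + 1 := by omega
  have h4 : (F.card : ℝ) ≤ ⌊2 * T / η⌋ + 1 := by exact_mod_cast h3
  have := Int.floor_le (2 * T / η)
  linarith

lemma CPair.dens {a b : ℝ → ℂ} (P : CPair a b) : ∃ κ > 0, ∀ h, (∃ l, cc a h l ≠ 0) →
    ∃ N1 : ℝ, ∀ N ≥ N1, ∀ F : Finset ℝ, (∀ l, cc a h l ≠ 0 → |l| ≤ N → l ∈ F) → κ * N ≤ F.card := by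
  classical
  obtain ⟨η, hη, hsepa⟩ := P.uda
  obtain ⟨δ, hδ, hsepb⟩ := P.udb
  obtain ⟨C, hC, hCa⟩ := P.bdd
  obtain ⟨κ, hκ, hd⟩ := _root_.dens hη (half_pos hδ)
  obtain ⟨ψ0, -, hψ, -, hχ0⟩ := exists_bump (3 * δ / 4) (δ / 8) (by positivity)
  set χ : SR := 𝓕 ψ0 with hχ
  refine ⟨κ / 2, by positivity, ?_⟩
  rintro h ⟨x0, hx0⟩
  set G : ℝ → ℂ := fun y => cc a h (y + x0) * χ y with hG
  have hGne : ∀ y, G y ≠ 0 → cc a h (y + x0) ≠ 0 := fun y hy => left_ne_zero_of_mul hy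
  have hGs : Summable fun y => ‖G y‖ := by
    have h1 := (P.sa (trS x0 χ)).mul_right C
    rw [← (Equiv.addRight x0).summable_iff] at h1
    refine Summable.of_nonneg_of_le (fun _ => norm_nonneg _) (fun y => ?_) h1
    simp only [Function.comp, Equiv.coe_addRight, trS_apply, add_sub_cancel_right, hG, cc, norm_mul,
      RCLike.norm_conj]
    have := mul_le_mul_of_nonneg_left (hCa (y + x0 + h)) (by positivity : 0 ≤ ‖a (y + x0)‖ * ‖χ y‖)
    linarith
  obtain ⟨N0, hN0⟩ := hd G hGs (mul_ne_zero (by rwa [zero_add]) hχ0) (by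
    intro x y hx hy hxy
    have := hsepa (x + x0) (y + x0) (cc_ne.1 (hGne x hx)).1 (cc_ne.1 (hGne y hy)).1 (by
      rwa [add_sub_add_right_eq_sub])
    linarith) (by
    intro s hs0 hs
    have h1 := P.V' (trS (-s) ψ0) (by
      intro r r' hr hr'
      rw [trS_apply]
      apply hψ
      by_cases e : r' = r
      · rw [e, le_abs]; right; linarith
      · have : δ ≤ |r' - r| := by
          by_contra hcon
          exact e (hsepb r' r hr' hr (by linarith))
        rcases le_abs.1 this with h | h
        · rw [le_abs]; left; linarith
        · rw [le_abs]; right; linarith) h x0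
    rw [← (Equiv.addRight x0).tsum_eq] at h1
    rw [← h1]
    apply tsum_congr
    intro y
    rw [four_tr]
    simp only [Equiv.coe_addRight, add_sub_cancel_right, neg_neg, hG]
    rw [← hχ]
    ring)
  refine ⟨max (2 * N0) (2 * |x0|), ?_⟩
  intro N hN F hF
  have hN1 : 2 * N0 ≤ N := (le_max_left _ _).trans hN
  have hN2 : 2 * |x0| ≤ N := (le_max_right _ _).trans hN
  have := hN0 (N / 2) (by linarith) (F.image (fun l => l - x0)) (by
    intro y hy hyN
    rw [Finset.mem_image]
    refine ⟨y + x0, hF _ (hGne y hy) ?_, by ring⟩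
    have := abs_add_le y x0
    linarith)
  have h2 : ((F.image (fun l => l - x0)).card : ℝ) ≤ F.card := by exact_mod_cast Finset.card_image_le
  linarith

lemma CPair.fd {a b : ℝ → ℂ} (P : CPair a b) (T : ℝ) : {h | |h| ≤ T ∧ ∃ l, cc a h l ≠ 0}.Finite := by
  classical
  by_contra hinf
  have hT : 0 ≤ T := by
    obtain ⟨h, hh⟩ := Set.Infinite.nonempty hinf
    exact (abs_nonneg h).trans hh.1
  obtain ⟨η, hη, hsepa⟩ := P.uda
  obtain ⟨κ, hκ, hd⟩ := P.dens
  obtain ⟨M, hM⟩ := exists_nat_gt ((2 / η + 1) * (2 * T / η + 1) / κ)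
  obtain ⟨H, hH, hHc⟩ := Set.Infinite.exists_subset_card_eq hinf M
  have hex : ∃ N : ℝ, 1 ≤ N ∧ ∀ h ∈ H, ∀ F : Finset ℝ, (∀ l, cc a h l ≠ 0 → |l| ≤ N → l ∈ F) → κ * N ≤ F.card := by
    have hc : ∀ h, ∃ N1 : ℝ, h ∈ H → ∀ N ≥ N1, ∀ F : Finset ℝ,
        (∀ l, cc a h l ≠ 0 → |l| ≤ N → l ∈ F) → κ * N ≤ F.card := by
      intro h
      by_cases hh : h ∈ H
      · obtain ⟨N1, hN1⟩ := hd h (hH hh).2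
        exact ⟨N1, fun _ => hN1⟩
      · exact ⟨0, fun h' => absurd h' hh⟩
    choose N1 hN1 using hc
    refine ⟨1 + ∑ h ∈ H, |N1 h|, ?_, ?_⟩
    · have := Finset.sum_nonneg (s := H) (f := fun h => |N1 h|) (fun _ _ => abs_nonneg _)
      linarith
    · intro h hh
      apply hN1 h hh
      have := Finset.single_le_sum (s := H) (f := fun h => |N1 h|) (fun _ _ => abs_nonneg _) hh
      have h2 := le_abs_self (N1 h)
      linarith
  obtain ⟨N, hN1, hN⟩ := hex
  have hfin : {l | a l ≠ 0 ∧ |l| ≤ N}.Finite := by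
    refine (P.lfa 0 (N + 1)).subset ?_
    rintro l ⟨h1, h2⟩
    refine ⟨h1, ?_⟩
    rw [Metric.mem_ball, Real.dist_eq, sub_zero]; linarith
  set A := hfin.toFinset with hA
  have hAm : ∀ l, l ∈ A ↔ a l ≠ 0 ∧ |l| ≤ N := fun l => by rw [hA, Set.Finite.mem_toFinset]; rfl
  have hAc : (A.card : ℝ) ≤ 2 * N / η + 1 := by
    apply card_sep (x := 0) hη (by linarith)
    · intro x hx y hy
      exact hsepa x y ((hAm x).1 hx).1 ((hAm y).1 hy).1
    · intro l hl; rw [sub_zero]; exact ((hAm l).1 hl).2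
  have h1 : ∀ h ∈ H, κ * N ≤ ((A.filter fun l => cc a h l ≠ 0).card : ℝ) := by
    intro h hh
    apply hN h hh
    intro l hl hlN
    rw [Finset.mem_filter, hAm]
    exact ⟨⟨(cc_ne.1 hl).1, hlN⟩, hl⟩
  have h2 : ∀ l ∈ A, ((H.filter fun h => cc a h l ≠ 0).card : ℝ) ≤ 2 * T / η + 1 := by
    intro l _
    apply card_sep (x := 0) hη hT
    · intro x hx y hy hxy
      have e1 := (cc_ne.1 (Finset.mem_filter.1 hx).2).2
      have e2 := (cc_ne.1 (Finset.mem_filter.1 hy).2).2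
      have := hsepa _ _ e1 e2 (by rwa [add_sub_add_left_eq_sub])
      linarith
    · intro h hh; rw [sub_zero]; exact (hH (Finset.mem_filter.1 hh).1).1
  have h3 : ∑ h ∈ H, (A.filter fun l => cc a h l ≠ 0).card = ∑ l ∈ A, (H.filter fun h => cc a h l ≠ 0).card :=
    Finset.sum_card_bipartiteAbove_eq_sum_card_bipartiteBelow (fun h l => cc a h l ≠ 0)
  have h3' : ∑ h ∈ H, ((A.filter fun l => cc a h l ≠ 0).card : ℝ) =
      ∑ l ∈ A, ((H.filter fun h => cc a h l ≠ 0).card : ℝ) := by exact_mod_cast h3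
  have h4 := Finset.sum_le_sum h1
  have h5 := Finset.sum_le_sum h2
  rw [Finset.sum_const, nsmul_eq_mul] at h4 h5
  rw [hHc] at h4
  have h6 : (M : ℝ) * (κ * N) ≤ (2 * N / η + 1) * (2 * T / η + 1) :=
    h4.trans (h3'.le.trans (h5.trans (mul_le_mul_of_nonneg_right hAc (by positivity))))
  have h7 : (2 * N / η + 1) * (2 * T / η + 1) ≤ N * ((2 / η + 1) * (2 * T / η + 1)) := by
    rw [← mul_assoc]
    apply mul_le_mul_of_nonneg_right _ (by positivity)
    have : N * (2 / η + 1) = 2 * N / η + N := by ring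
    rw [this]; linarith
  rw [div_lt_iff₀ hκ] at hM
  have h8 := mul_lt_mul_of_pos_left hM (by linarith : 0 < N)
  have : N * (M * κ) = M * (κ * N) := by ring
  linarith


lemma almost_period (T : Finset ℝ) (ε : ℝ) (hε : 0 < ε) :
    ∃ L : ℝ, 0 ≤ L ∧ ∀ x : ℝ, ∃ τ : ℝ, |x - τ| ≤ L ∧ ∀ t ∈ T, ‖e2piR τ t - 1‖ ≤ ε := by
  set f : ℝ → (T → ℂ) := fun x t => e2piR x t with hf
  have htb : TotallyBounded (Set.range f) := by
    apply TotallyBounded.subset _ (isCompact_closedBall (0 : T → ℂ) 1).totallyBounded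
    rintro _ ⟨x, rfl⟩
    rw [mem_closedBall_zero_iff, pi_norm_le_iff_of_nonneg zero_le_one]
    intro t; exact (e2_norm _ _).le
  obtain ⟨Y, hY1, hY2, hY3⟩ := Metric.finite_approx_of_totallyBounded htb ε hε
  have hc : ∀ y, ∃ x, y ∈ Y → f x = y := by
    intro y
    by_cases hy : y ∈ Y
    · obtain ⟨x, hx⟩ := hY1 hy; exact ⟨x, fun _ => hx⟩
    · exact ⟨0, fun h => absurd h hy⟩
  choose g hg using hc
  refine ⟨∑ y ∈ hY2.toFinset, |g y|, Finset.sum_nonneg fun _ _ => abs_nonneg _, ?_⟩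
  intro x
  have hx := hY3 (Set.mem_range_self x)
  simp only [Set.mem_iUnion] at hx
  obtain ⟨y, hy, hxy⟩ := hx
  refine ⟨x - g y, ?_, ?_⟩
  · rw [sub_sub_cancel]
    exact Finset.single_le_sum (f := fun y => |g y|) (fun _ _ => abs_nonneg _) (hY2.mem_toFinset.2 hy)
  · intro t ht
    rw [mem_ball, dist_eq_norm, ← hg y hy] at hxy
    have h1 : ‖e2piR x t - e2piR (g y) t‖ ≤ ‖f x - f (g y)‖ := norm_le_pi_norm (f x - f (g y)) ⟨t, ht⟩
    have h2 : e2piR x t - e2piR (g y) t = e2piR (g y) t * (e2piR (x - g y) t - 1) := by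
      rw [mul_sub, ← e2_add_left]; simp
    rw [h2, norm_mul, e2_norm, one_mul] at h1
    linarith

lemma schwartz_bd (g : SR) : ∃ C > 0, ∀ y, ‖g y‖ ≤ C * (1 / (1 + y ^ 2)) := by
  obtain ⟨C0, h0, h0'⟩ := schwartz_decay g 0
  obtain ⟨C2, h2, h2'⟩ := schwartz_decay g 2
  refine ⟨C0 + C2, by positivity, fun y => ?_⟩
  have e0 := h0' y
  have e2 := h2' y
  rw [pow_zero, one_mul] at e0
  rw [sq_abs] at e2
  rw [mul_one_div, le_div_iff₀ (by positivity)]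
  linarith

lemma ccb {a : ℝ → ℂ} {K : ℝ}
    (hK : ∀ x, ∀ F : Finset ℝ, (∀ l ∈ F, l ∈ {x | a x ≠ 0}) → ∑ l ∈ F, 1 / (1 + (l - x) ^ 2) ≤ K)
    (h q D x : ℝ) (g : ℝ → ℂ) (hq : ∀ l, ‖cc a h l‖ ≤ q) (hD : 0 ≤ D)
    (hg : ∀ l, cc a h l ≠ 0 → ‖g l‖ ≤ D * (1 / (1 + (l - x) ^ 2))) :
    (Summable fun l => cc a h l * g l) ∧ ‖∑' l, cc a h l * g l‖ ≤ q * D * K := by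
  have hq0 : 0 ≤ q := (norm_nonneg _).trans (hq 0)
  have h1 := series_bound hK (fun l => ‖cc a h l * g l‖) (fun _ => norm_nonneg _) (by
    intro l hl
    have : a l = 0 := by simpa using hl
    simp [cc, this]) x (q * D) (by positivity) (by
    intro l
    by_cases hl : cc a h l = 0
    · rw [hl]; simp; positivity
    · rw [norm_mul, mul_assoc]
      exact mul_le_mul (hq l) (hg l hl) (norm_nonneg _) hq0)
  exact ⟨h1.1.of_norm, (norm_tsum_le_tsum_norm h1.1).trans h1.2⟩

lemma CPair.isoD {a b : ℝ → ℂ} (P : CPair a b) :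
    ∀ t : ℝ, ∃ χ : SR, χ t = 1 ∧ ∀ d, (∃ l, cc a d l ≠ 0) → d ≠ t → χ d = 0 := by
  intro t
  have hf := (P.fd (|t| + 1)).subset
    (t := {h | |h| ≤ |t| + 1 ∧ (∃ l, cc a h l ≠ 0)} \ {t}) sdiff_subset
  have hcl := hf.isClosed
  have hmem : ({h | |h| ≤ |t| + 1 ∧ (∃ l, cc a h l ≠ 0)} \ {t})ᶜ ∈ nhds t := by
    apply hcl.isOpen_compl.mem_nhds
    simp
  obtain ⟨r, hr, hball⟩ := Metric.mem_nhds_iff.1 hmem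
  obtain ⟨χ, h1, h2, -, -⟩ := exists_bump t (min r 1) (by positivity)
  refine ⟨χ, h1, fun d hd hdt => h2 d ?_⟩
  by_contra hcon
  push Not at hcon
  have hd1 : |d - t| < r := hcon.trans_le (min_le_left _ _)
  have hd2 : |d - t| < 1 := hcon.trans_le (min_le_right _ _)
  have := hball (by rw [mem_ball, Real.dist_eq]; exact hd1 : d ∈ ball t r)
  apply this
  refine ⟨⟨?_, hd⟩, hdt⟩
  have := abs_add_le (d - t) t
  rw [sub_add_cancel] at this
  linarith

lemma exists_theta {η K : ℝ} (hη : 0 < η) (hK : 0 < K) : ∃ (θ : SR) (M : ℝ), (∀ t, ‖θ t‖ ≤ 1) ∧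
    (∀ t, M < |t| → θ t = 0) ∧ 0 < ‖(𝓕 θ) 0‖ ∧
    ∀ y, η ≤ |y| → ‖(𝓕 θ) y‖ ≤ ‖(𝓕 θ) 0‖ / (8 * K) * (1 / (1 + y ^ 2)) := by
  obtain ⟨u, -, hu0, hu1, hu2⟩ := exists_bump 0 1 one_pos
  have hc0p : 0 < ‖(𝓕 u) 0‖ := norm_pos_iff.2 hu2
  obtain ⟨C2, hC2, hd2⟩ := schwartz_decay (𝓕 u : SR) 2
  obtain ⟨M, hM1, hM⟩ : ∃ M : ℝ, 1 ≤ M ∧ C2 * (1 + 1 / η ^ 2) / M ^ 2 ≤ ‖(𝓕 u) 0‖ / (8 * K) := by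
    have hWp : 0 < C2 * (1 + 1 / η ^ 2) := by positivity
    generalize C2 * (1 + 1 / η ^ 2) = W at *
    generalize ‖(𝓕 u) 0‖ = c0 at *
    have h1 : 1 ≤ max 1 (8 * K * W / c0) := le_max_left _ _
    have h2 : 8 * K * W / c0 ≤ max 1 (8 * K * W / c0) := le_max_right _ _
    refine ⟨max 1 (8 * K * W / c0), h1, ?_⟩
    generalize max 1 (8 * K * W / c0) = M at *
    rw [div_le_iff₀ hc0p] at h2
    rw [div_le_div_iff₀ (by positivity) (by positivity)]
    have h3 : M * c0 * 1 ≤ M * c0 * M := mul_le_mul_of_nonneg_left h1 (by positivity)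
    nlinarith
  have hMp : 0 < M := by linarith
  obtain ⟨θ, hθ, hθF⟩ := exists_dil u M hMp
  have h0 : ‖(𝓕 θ) 0‖ = M * ‖(𝓕 u) 0‖ := by
    rw [hθF, mul_zero, norm_mul, Complex.norm_real, Real.norm_of_nonneg hMp.le]
  refine ⟨θ, M, fun t => by rw [hθ]; exact hu1 _, fun t ht => ?_, ?_, ?_⟩
  · rw [hθ]; apply hu0
    rw [sub_zero, abs_div, abs_of_pos hMp, le_div_iff₀ hMp]; linarith
  · rw [h0]; positivity
  · intro y hy'
    rw [h0, hθF, norm_mul, Complex.norm_real, Real.norm_of_nonneg hMp.le, mul_div_assoc, mul_assoc]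
    apply mul_le_mul_of_nonneg_left _ hMp.le
    have hy : 0 < |y| := hη.trans_le hy'
    have := hd2 (M * y)
    rw [abs_mul, abs_of_pos hMp, mul_pow, sq_abs] at this
    have hy2 : η ^ 2 ≤ y ^ 2 := by rw [← sq_abs y]; exact pow_le_pow_left₀ hη.le hy' 2
    have hy2p : 0 < y ^ 2 := (by positivity : 0 < η ^ 2).trans_le hy2
    have e1 : ‖(𝓕 u) (M * y)‖ ≤ C2 / (M ^ 2 * y ^ 2) := by
      rw [le_div_iff₀ (by positivity)]; linarith
    refine e1.trans (le_trans ?_ (mul_le_mul_of_nonneg_right hM (by positivity)))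
    rw [mul_one_div, div_div, div_le_div_iff₀ (by positivity) (by positivity)]
    have e2 : 1 + y ^ 2 ≤ (1 + 1 / η ^ 2) * y ^ 2 := by
      have : 1 ≤ 1 / η ^ 2 * y ^ 2 := by
        rw [one_div, inv_mul_eq_div, le_div_iff₀ (by positivity)]; linarith
      linarith
    calc C2 * (M ^ 2 * (1 + y ^ 2)) ≤ C2 * (M ^ 2 * ((1 + 1 / η ^ 2) * y ^ 2)) := by gcongr
      _ = _ := by ring

lemma four_lin (ψ : SR) (T : Finset ℝ) (c : ℝ → ℂ) (χ : ℝ → SR) (l : ℝ) :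
    (𝓕 (ψ - ∑ t ∈ T, c t • χ t)) l = (𝓕 ψ) l - ∑ t ∈ T, c t * (𝓕 (χ t)) l := by
  have h1 : 𝓕 (ψ - ∑ t ∈ T, c t • χ t) = 𝓕 ψ - ∑ t ∈ T, c t • 𝓕 (χ t) := by
    rw [← FourierTransform.fourierCLM_apply (R := ℂ), map_sub, map_sum]
    simp only [map_smul, FourierTransform.fourierCLM_apply]
  rw [h1]
  simp only [sub_apply, sum_apply, smul_apply, smul_eq_mul]

lemma CPair.trigF {a b : ℝ → ℂ} (P : CPair a b) (θ : SR) (M : ℝ) (hθ0 : ∀ t, M < |t| → θ t = 0) :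
    ∃ (T : Finset ℝ) (B : ℝ → ℝ), (∀ t, 0 < B t) ∧ ∀ h q, (∀ l, ‖cc a h l‖ ≤ q) →
      ∃ β : ℝ → ℂ, (∀ t, ‖β t‖ ≤ q * B t) ∧
        ∀ x, ∑' l, cc a h l * (𝓕 θ) (l - x) = ∑ t ∈ T, θ t * e2piR x t * β t := by
  classical
  obtain ⟨η, hη, hsepa⟩ := P.uda
  obtain ⟨K, hK0, hK⟩ := sum_bound (A := {x | a x ≠ 0}) ⟨η, hη, fun x hx y hy => hsepa x y hx hy⟩
  have hfd := P.dual.fd M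
  obtain ⟨T, hTm⟩ : ∃ T : Finset ℝ, ∀ t, t ∈ T ↔ |t| ≤ M ∧ ∃ l, cc b t l ≠ 0 :=
    ⟨hfd.toFinset, fun t => by rw [Set.Finite.mem_toFinset]; rfl⟩
  choose χ hχ1 hχ0 using P.dual.isoD
  choose B hB0 hB using fun t => schwartz_bd (𝓕 (χ t) : SR)
  refine ⟨T, fun t => B t * K, fun t => mul_pos (hB0 t) hK0, ?_⟩
  intro h q hmax
  have hβs : ∀ t, (Summable fun l => cc a h l * (𝓕 (χ t)) l) ∧
      ‖∑' l, cc a h l * (𝓕 (χ t)) l‖ ≤ q * B t * K := by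
    intro t
    have hBt := hB t
    have hBt0 := hB0 t
    generalize (𝓕 (χ t) : SR) = g at hBt
    generalize B t = D at hBt hBt0
    apply ccb hK h q D 0 _ hmax hBt0.le
    intro l _
    rw [sub_zero]
    exact hBt l
  refine ⟨fun t => ∑' l, cc a h l * (𝓕 (χ t)) l, fun t => by rw [← mul_assoc]; exact (hβs t).2, ?_⟩
  intro x
  have hvan : ∀ s s', b s ≠ 0 → b s' ≠ 0 →
      (modS x θ - ∑ t ∈ T, (θ t * e2piR x t) • χ t) (s' - s) = 0 := by
    intro s s' hs hs'
    have hd : ∃ l, cc b (s' - s) l ≠ 0 := ⟨s, cc_ne.2 ⟨hs, by rwa [add_sub_cancel]⟩⟩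
    generalize s' - s = d at hd
    rw [sub_apply, sum_apply]
    simp only [smul_apply, modS_apply, smul_eq_mul]
    by_cases hdM : |d| ≤ M
    · have hdT : d ∈ T := (hTm d).2 ⟨hdM, hd⟩
      rw [Finset.sum_eq_single d]
      · rw [hχ1]; ring
      · intro t _ htd
        rw [hχ0 t d hd (Ne.symm htd), mul_zero]
      · intro h; exact absurd hdT h
    · push Not at hdM
      rw [hθ0 d hdM, mul_zero, Finset.sum_eq_zero, sub_zero]
      intro t ht
      rw [hχ0 t d hd, mul_zero]
      rintro rfl
      exact absurd ((hTm d).1 ht).1 (not_le.2 hdM)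
  have hV := P.V _ hvan h
  have e : ∀ l, cc a h l * (𝓕 (modS x θ - ∑ t ∈ T, (θ t * e2piR x t) • χ t)) l =
      cc a h l * (𝓕 θ) (l - x) - ∑ t ∈ T, cc a h l * (θ t * e2piR x t * (𝓕 (χ t)) l) := by
    intro l
    rw [four_lin (modS x θ) T (fun t => θ t * e2piR x t) χ l, four_mod, mul_sub, Finset.mul_sum]
  rw [tsum_congr e] at hV
  have hs1 : Summable fun l => cc a h l * (𝓕 θ) (l - x) := by
    obtain ⟨D, hD0, hD⟩ := schwartz_bd (𝓕 θ : SR)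
    refine (ccb hK h q D x _ hmax hD0.le (fun l _ => ?_)).1
    exact hD (l - x)
  have hs2 : ∀ t ∈ T, Summable fun l => cc a h l * (θ t * e2piR x t * (𝓕 (χ t)) l) := by
    intro t _
    have := (hβs t).1.mul_left (θ t * e2piR x t)
    refine this.congr (fun l => ?_)
    ring
  have hs3 : Summable fun l => ∑ t ∈ T, cc a h l * (θ t * e2piR x t * (𝓕 (χ t)) l) := summable_sum hs2
  rw [hs1.tsum_sub hs3, Summable.tsum_finsetSum hs2, sub_eq_zero] at hV
  refine hV.trans ?_
  apply Finset.sum_congr rfl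
  intro t _
  rw [← tsum_mul_left]
  exact tsum_congr fun l => by ring

lemma low_aux {a : ℝ → ℂ} {K η q c : ℝ} (hη : 0 < η) (hK0 : 0 < K)
    (hsepa : ∀ x y, a x ≠ 0 → a y ≠ 0 → |x - y| < η → x = y)
    (hK : ∀ x, ∀ F : Finset ℝ, (∀ l ∈ F, l ∈ {x | a x ≠ 0}) → ∑ l ∈ F, 1 / (1 + (l - x) ^ 2) ≤ K)
    (g : SR) (hgc : ‖g 0‖ = c) (hg : ∀ y, η ≤ |y| → ‖g y‖ ≤ c / (8 * K) * (1 / (1 + y ^ 2))) (h l0 : ℝ)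
    (hq : ‖cc a h l0‖ = q) (hq0 : 0 < q) (hmax : ∀ l, ‖cc a h l‖ ≤ 2 * q) :
    3 / 4 * (q * c) ≤ ‖∑' l, cc a h l * g (l - l0)‖ := by
  have hal0 : a l0 ≠ 0 := (cc_ne.1 (norm_pos_iff.1 (hq ▸ hq0))).1
  have hc : 0 ≤ c := hgc ▸ norm_nonneg _
  have hsum : Summable fun l => cc a h l * g (l - l0) := by
    obtain ⟨D, hD0, hD⟩ := schwartz_bd g
    exact (ccb hK h (2 * q) D l0 _ hmax hD0.le (fun l _ => hD (l - l0))).1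
  have h1 : ∑' l, cc a h l * g (l - l0) = cc a h l0 * g 0 + ∑' l, cc a h l * (if l = l0 then 0 else g (l - l0)) := by
    rw [hsum.tsum_eq_add_tsum_ite l0]
    congr 1
    · simp
    · apply tsum_congr; intro l; split_ifs <;> simp
  have h2 := (ccb hK h (2 * q) (c / (8 * K)) l0
      (fun l => if l = l0 then 0 else g (l - l0)) hmax (by positivity) (by
        intro l hl
        split_ifs with hll
        · rw [norm_zero]; positivity
        · apply hg
          by_contra hcon
          exact hll (hsepa l l0 (cc_ne.1 hl).1 hal0 (by linarith)))).2
  have h3 : 2 * q * (c / (8 * K)) * K = q * c / 4 := by field_simp; ring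
  rw [h3] at h2
  have h5 : ‖cc a h l0 * g 0‖ = q * c := by rw [norm_mul, hq, hgc]
  have h6 := norm_sub_le_norm_add (cc a h l0 * g 0) (∑' l, cc a h l * (if l = l0 then 0 else g (l - l0)))
  rw [← h1, h5] at h6
  linarith

lemma far_aux {a : ℝ → ℂ} {K q C3 R1 : ℝ}
    (hK : ∀ x, ∀ F : Finset ℝ, (∀ l ∈ F, l ∈ {x | a x ≠ 0}) → ∑ l ∈ F, 1 / (1 + (l - x) ^ 2) ≤ K)
    (g : SR) (hC3 : 0 < C3) (hd3 : ∀ y, |y| ^ 3 * ‖g y‖ ≤ C3) (h x : ℝ) (hmax : ∀ l, ‖cc a h l‖ ≤ 2 * q)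
    (hR1 : 1 ≤ R1) (hfar : ∀ l, cc a h l ≠ 0 → R1 ≤ |l - x|) :
    ‖∑' l, cc a h l * g (l - x)‖ ≤ q / 2 * (8 * C3 * K / R1) := by
  have h2 := (ccb hK h (2 * q) (2 * C3 / R1) x
      (fun l => g (l - x)) hmax (by positivity) (by
        intro l hl
        have hl' := hfar l hl
        have e0 := hd3 (l - x)
        generalize l - x = y at *
        have hy : 0 < |y| := by linarith
        rw [mul_one_div, div_div, le_div_iff₀ (by positivity)]
        have e2 : R1 * (1 + y ^ 2) ≤ 2 * |y| ^ 3 := by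
          rw [← sq_abs y]
          have h1y : 1 ≤ |y| := by linarith
          have : 1 + |y| ^ 2 ≤ 2 * |y| ^ 2 := by nlinarith
          calc R1 * (1 + |y| ^ 2) ≤ |y| * (2 * |y| ^ 2) := by gcongr
            _ = _ := by ring
        calc ‖g y‖ * (R1 * (1 + y ^ 2)) ≤ ‖g y‖ * (2 * |y| ^ 3) := by gcongr
          _ = 2 * (|y| ^ 3 * ‖g y‖) := by ring
          _ ≤ 2 * C3 := by linarith)).2
  have h3 : 2 * q * (2 * C3 / R1) * K = q / 2 * (8 * C3 * K / R1) := by ring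
  rwa [h3] at h2

lemma CPair.uniR {a b : ℝ → ℂ} (P : CPair a b) : ∃ R > 0, ∀ h, (∃ l, cc a h l ≠ 0) →
    ∀ x, ∃ l, |l - x| ≤ R ∧ cc a h l ≠ 0 := by
  classical
  obtain ⟨η, hη, hsepa⟩ := P.uda
  obtain ⟨C, hC, hCa⟩ := P.bdd
  obtain ⟨K, hK0, hK⟩ := sum_bound (A := {x | a x ≠ 0}) ⟨η, hη, fun x hx y hy => hsepa x y hx hy⟩
  obtain ⟨θ, M, hθ1, hθ0, hc0p, hθη⟩ := exists_theta hη hK0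
  obtain ⟨C3, hC3, hd3⟩ := schwartz_decay (𝓕 θ : SR) 3
  obtain ⟨T, B, hB0, hT⟩ := P.trigF θ M hθ0
  obtain ⟨g, hg⟩ : ∃ g : SR, g = 𝓕 θ := ⟨_, rfl⟩
  simp only [← hg] at *
  obtain ⟨c0, hc0⟩ : ∃ c : ℝ, c = ‖g 0‖ := ⟨_, rfl⟩
  rw [← hc0] at hc0p hθη
  have hSB : 0 ≤ ∑ t ∈ T, B t := Finset.sum_nonneg fun t _ => (hB0 t).le
  obtain ⟨ε, hεp, hε⟩ : ∃ ε > 0, ε * (∑ t ∈ T, B t) ≤ c0 / 8 := by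
    refine ⟨c0 / (8 * (1 + ∑ t ∈ T, B t)), by positivity, ?_⟩
    rw [div_mul_eq_mul_div, div_le_div_iff₀ (by positivity) (by positivity)]
    nlinarith
  obtain ⟨L, hL0, hL⟩ := almost_period T ε hεp
  obtain ⟨R1, hR1, hR1'⟩ : ∃ R1 : ℝ, 1 ≤ R1 ∧ 8 * C3 * K / R1 < c0 := by
    have h1 : 1 ≤ max 1 (8 * C3 * K / c0 + 1) := le_max_left _ _
    have h2 : 8 * C3 * K / c0 + 1 ≤ max 1 (8 * C3 * K / c0 + 1) := le_max_right _ _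
    refine ⟨max 1 (8 * C3 * K / c0 + 1), le_max_left _ _, ?_⟩
    generalize max 1 (8 * C3 * K / c0 + 1) = R1 at *
    have h3 : 8 * C3 * K / c0 < R1 := by linarith
    rw [div_lt_iff₀ hc0p] at h3
    rw [div_lt_iff₀ (by positivity)]
    linarith
  refine ⟨R1 + L, by positivity, ?_⟩
  rintro h ⟨l1, hl1⟩ x
  obtain ⟨l0, hl0, hmax⟩ : ∃ l0, 0 < ‖cc a h l0‖ ∧ ∀ l, ‖cc a h l‖ ≤ 2 * ‖cc a h l0‖ := by
    have hbdd : BddAbove (Set.range fun l => ‖cc a h l‖) := by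
      refine ⟨C * C, ?_⟩
      rintro _ ⟨l, rfl⟩
      simp only [cc, norm_mul, RCLike.norm_conj]
      exact mul_le_mul (hCa _) (hCa _) (norm_nonneg _) hC.le
    set m := ⨆ l, ‖cc a h l‖ with hm
    have hle : ∀ l, ‖cc a h l‖ ≤ m := fun l => le_ciSup hbdd l
    have hmp : 0 < m := (norm_pos_iff.2 hl1).trans_le (hle l1)
    obtain ⟨l0, hl0⟩ := exists_lt_of_lt_ciSup (half_lt_self hmp)
    exact ⟨l0, by linarith, fun l => by have := hle l; linarith⟩
  obtain ⟨q, hq⟩ : ∃ q : ℝ, ‖cc a h l0‖ = q := ⟨_, rfl⟩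
  rw [hq] at hl0 hmax
  obtain ⟨τ, hτ1, hτ2⟩ := hL (x - l0)
  obtain ⟨β, hβ, hF⟩ := hT h (2 * q) hmax
  have hdiff : ‖(∑' l, cc a h l * g (l - (l0 + τ))) - ∑' l, cc a h l * g (l - l0)‖ ≤ q * c0 / 4 := by
    rw [hF, hF, ← Finset.sum_sub_distrib]
    have h2 : ‖∑ t ∈ T, (θ t * e2piR (l0 + τ) t * β t - θ t * e2piR l0 t * β t)‖ ≤ ∑ t ∈ T, ε * (2 * q * B t) := by
      apply norm_sum_le_of_le
      intro t ht
      have e : θ t * e2piR (l0 + τ) t * β t - θ t * e2piR l0 t * β t = θ t * e2piR l0 t * (e2piR τ t - 1) * β t := by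
        rw [e2_add_left]; ring
      rw [e, norm_mul, norm_mul, norm_mul, e2_norm, mul_one]
      apply mul_le_mul _ (hβ t) (norm_nonneg _) hεp.le
      calc ‖θ t‖ * ‖e2piR τ t - 1‖ ≤ 1 * ε := mul_le_mul (hθ1 t) (hτ2 t ht) (norm_nonneg _) zero_le_one
        _ = ε := one_mul _
    have h3 : ∑ t ∈ T, ε * (2 * q * B t) = 2 * q * (ε * (∑ t ∈ T, B t)) := by
      rw [Finset.mul_sum, Finset.mul_sum]
      exact Finset.sum_congr rfl fun t _ => by ring
    rw [h3] at h2
    refine h2.trans ?_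
    calc 2 * q * (ε * (∑ t ∈ T, B t)) ≤ 2 * q * (c0 / 8) :=
            mul_le_mul_of_nonneg_left hε (by positivity)
        _ = _ := by ring
  have hF0 := low_aux hη hK0 hsepa hK g hc0.symm hθη h l0 hq hl0 hmax
  have hFτ : q * c0 / 2 ≤ ‖∑' l, cc a h l * g (l - (l0 + τ))‖ := by
    have := norm_sub_norm_le (∑' l, cc a h l * g (l - l0)) (∑' l, cc a h l * g (l - (l0 + τ)))
    rw [norm_sub_rev] at this
    linarith
  by_contra hcon
  push Not at hcon
  have hfar : ∀ l, cc a h l ≠ 0 → R1 ≤ |l - (l0 + τ)| := by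
    intro l hl
    by_contra hl'
    push Not at hl'
    apply hl
    apply hcon
    have := abs_sub_le l (l0 + τ) x
    have e : |l0 + τ - x| = |x - l0 - τ| := by rw [abs_sub_comm]; congr 1; ring
    linarith
  have h2 := far_aux hK g hC3 hd3 h (l0 + τ) hmax hR1 hfar
  have h4 : q / 2 * (8 * C3 * K / R1) < q / 2 * c0 := mul_lt_mul_of_pos_left hR1' (by positivity)
  linarith


lemma chain_lem {A : Set ℝ} {R : ℝ} (hR : 0 < R) (hA : ∀ x, ∃ l ∈ A, |l - x| ≤ R) (H : AddSubgroup ℝ)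
    (hH : ∀ x ∈ A, ∀ y ∈ A, |x - y| ≤ 2 * R + 1 → x - y ∈ H) : ∀ x ∈ A, ∀ y ∈ A, x - y ∈ H := by
  have key : ∀ n : ℕ, ∀ x ∈ A, ∀ y ∈ A, y ≤ x → x - y ≤ n → x - y ∈ H := by
    intro n
    induction n with
    | zero =>
      intro x hx y hy h1 h2
      apply hH x hx y hy
      rw [abs_le]; push_cast at h2; constructor <;> linarith
    | succ n ih =>
      intro x hx y hy h1 h2
      push_cast at h2
      by_cases h3 : x - y ≤ 2 * R + 1
      · exact hH x hx y hy (by rw [abs_le]; constructor <;> linarith)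
      · push Not at h3
        obtain ⟨z, hz, hzx⟩ := hA (x - (R + 1))
        rw [abs_le] at hzx
        have e1 := hH x hx z hz (by rw [abs_le]; constructor <;> linarith)
        have e2 := ih z hz y hy (by linarith) (by linarith)
        have := H.add_mem e1 e2
        rwa [sub_add_sub_cancel] at this
  intro x hx y hy
  obtain ⟨n, hn⟩ := exists_nat_ge |x - y|
  rcases le_total y x with h | h
  · exact key n x hx y hy h ((le_abs_self _).trans hn)
  · have := key n y hy x hx h (by rw [abs_sub_comm] at hn; exact (le_abs_self _).trans hn)
    have := H.neg_mem this
    rwa [neg_sub] at this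

lemma quasi_lem (g : ℝ → ℝ) (C : ℝ) (hg : ∀ x y, |g (x + y) - g x - g y| ≤ C) (hb : ∀ x, |x| ≤ 1 → |g x| ≤ C) :
    ∃ ℓ C' : ℝ, ∀ x, |g x - ℓ * x| ≤ C' := by
  have hC : 0 ≤ C := (abs_nonneg _).trans (hg 0 0)
  have hsu : Subadditive (fun n : ℕ => g n + C) := by
    intro m n
    have := abs_le.1 (hg m n)
    push_cast; linarith [this.2]
  have hsv : Subadditive (fun n : ℕ => C - g n) := by
    intro m n
    have := abs_le.1 (hg m n)
    push_cast; linarith [this.1]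
  have hg1 : ∀ n : ℕ, |g n| ≤ n * (2 * C) + C := by
    intro n
    induction n with
    | zero => simpa using hb 0 (by simp)
    | succ n ih =>
      have h1 := abs_le.1 (hg n 1)
      have h2 := abs_le.1 (hb 1 (by simp))
      have h3 := abs_le.1 ih
      push_cast
      rw [abs_le]; constructor <;> nlinarith
  have hbu : BddBelow (Set.range fun n : ℕ => (g n + C) / n) := by
    refine ⟨-(3 * C), ?_⟩
    rintro _ ⟨n, rfl⟩
    rcases Nat.eq_zero_or_pos n with h | h
    · simp [h]; linarith
    · have hn : (1:ℝ) ≤ n := by exact_mod_cast h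
      simp only
      rw [le_div_iff₀ (by linarith)]
      have := abs_le.1 (hg1 n)
      nlinarith
  have hbv : BddBelow (Set.range fun n : ℕ => (C - g n) / n) := by
    refine ⟨-(3 * C), ?_⟩
    rintro _ ⟨n, rfl⟩
    rcases Nat.eq_zero_or_pos n with h | h
    · simp [h]; linarith
    · have hn : (1:ℝ) ≤ n := by exact_mod_cast h
      simp only
      rw [le_div_iff₀ (by linarith)]
      have := abs_le.1 (hg1 n)
      nlinarith
  have hlu := hsu.tendsto_lim hbu
  have hlv := hsv.tendsto_lim hbv
  have hsum : hsu.lim + hsv.lim = 0 := by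
    have h1 := hlu.add hlv
    have h2 : Filter.Tendsto (fun n : ℕ => 2 * C / (n : ℝ)) Filter.atTop (nhds 0) :=
      tendsto_const_div_atTop_nhds_zero_nat _
    refine tendsto_nhds_unique h1 (h2.congr fun n => ?_)
    ring
  set ℓ := hsu.lim with hℓ
  have hnat : ∀ n : ℕ, |g n - ℓ * n| ≤ C := by
    intro n
    rcases Nat.eq_zero_or_pos n with h | h
    · simpa [h] using hb 0 (by simp)
    · have hn : (0:ℝ) < n := by exact_mod_cast h
      have h1 := hsu.lim_le_div hbu h.ne'
      have h2 := hsv.lim_le_div hbv h.ne'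
      rw [le_div_iff₀ hn] at h1 h2
      rw [← hℓ] at h1
      have h3 : hsv.lim = - ℓ := by linarith
      rw [h3] at h2
      rw [abs_le]; constructor <;> linarith
  have hpos : ∀ x, 0 ≤ x → |g x - ℓ * x| ≤ 3 * C + |ℓ| := by
    intro x hx
    have h1 := Nat.floor_le hx
    have h2 := Nat.lt_floor_add_one x
    set n := ⌊x⌋₊
    have h3 := abs_le.1 (hg n (x - n))
    rw [add_sub_cancel] at h3
    have h4 := abs_le.1 (hb (x - n) (by rw [abs_le]; constructor <;> linarith))
    have h5 := abs_le.1 (hnat n)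
    have h6 : |ℓ * (x - n)| ≤ |ℓ| := by
      rw [abs_mul]
      have : |x - n| ≤ 1 := by rw [abs_le]; constructor <;> linarith
      nlinarith [abs_nonneg ℓ]
    have h7 := abs_le.1 h6
    rw [abs_le]; constructor <;> linarith [h7.1, h7.2, h5.1, h5.2, h4.1, h4.2, h3.1, h3.2]
  refine ⟨ℓ, 5 * C + |ℓ|, fun x => ?_⟩
  rcases le_total 0 x with h | h
  · have := hpos x h; linarith
  · have h1 := abs_le.1 (hpos (-x) (by linarith))
    have h2 := abs_le.1 (hg x (-x))
    rw [add_neg_cancel] at h2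
    have h3 := abs_le.1 (hb 0 (by simp))
    rw [abs_le]; constructor <;> linarith [h1.1, h1.2, h2.1, h2.2, h3.1, h3.2]

lemma coords (s : Set ℝ) (hs : s.Finite) : ∃ (ι : Type) (_ : Fintype ι) (φ : ι → ℝ →+ ℝ),
    (∀ i, ∀ g ∈ AddSubgroup.closure s, ∃ n : ℤ, φ i g = n) ∧
    ∀ g ∈ AddSubgroup.closure s, (∀ i, φ i g = 0) → g = 0 := by
  classical
  set N := Submodule.span ℤ s with hN
  have : Module.Finite ℤ N := Module.Finite.span_of_finite ℤ hs
  have : Module.Free ℤ N := inferInstance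
  let B := Module.Free.chooseBasis ℤ N
  have hmem : ∀ g ∈ AddSubgroup.closure s, g ∈ N := by
    intro g hg
    rw [hN, ← Submodule.mem_toAddSubgroup, Submodule.span_int_eq_addSubgroupClosure]
    exact hg
  have hli : LinearIndependent ℤ (fun i => (B i : ℝ)) :=
    B.linearIndependent.map' N.subtype (Submodule.ker_subtype N)
  have hliQ : LinearIndependent ℚ (fun i => (B i : ℝ)) := (LinearIndependent.iff_fractionRing ℤ ℚ).1 hli
  let E := Module.Basis.extend hliQ.linearIndepOn_id
  have hinj : Function.Injective (fun i => (B i : ℝ)) := hliQ.injective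
  have hf : ∀ i, ∃ f : ℝ →ₗ[ℚ] ℚ, ∀ j, f (B j : ℝ) = if j = i then 1 else 0 := by
    intro i
    refine ⟨E.constr ℚ (fun x => if (x : ℝ) = B i then 1 else 0), fun j => ?_⟩
    have hj : (B j : ℝ) ∈ hliQ.linearIndepOn_id.extend (Set.subset_univ _) :=
      hliQ.linearIndepOn_id.subset_extend _ ⟨j, rfl⟩
    have h1 := E.constr_basis ℚ (fun x => if (x : ℝ) = B i then (1:ℚ) else 0) ⟨(B j : ℝ), hj⟩
    have h2 : E ⟨(B j : ℝ), hj⟩ = (B j : ℝ) := Module.Basis.extend_apply_self _ _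
    rw [h2] at h1
    rw [h1]
    have : ((B j : ℝ) = B i) ↔ j = i := hinj.eq_iff
    simp [this]
  choose f hf using hf
  have hrep : ∀ i, ∀ g (hg : g ∈ N), f i g = ((B.repr ⟨g, hg⟩ i : ℤ) : ℚ) := by
    intro i g hg
    have h1 := B.sum_repr ⟨g, hg⟩
    have h2 := congrArg (fun z : N => (z : ℝ)) h1
    simp only [Submodule.coe_sum, Submodule.coe_smul] at h2
    conv_lhs => rw [← h2]
    rw [map_sum]
    simp only [map_zsmul, hf]
    simp
  refine ⟨Module.Free.ChooseBasisIndex ℤ N, inferInstance,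
    fun i => (Rat.castHom ℝ).toAddMonoidHom.comp (f i).toAddMonoidHom, ?_, ?_⟩
  · intro i g hg
    refine ⟨B.repr ⟨g, hmem g hg⟩ i, ?_⟩
    have := hrep i g (hmem g hg)
    simp [this]
  · intro g hg h
    have h0 : B.repr ⟨g, hmem g hg⟩ = 0 := by
      ext i
      have h1 := h i
      have := hrep i g (hmem g hg)
      simp [this] at h1
      simpa using h1
    have : (⟨g, hmem g hg⟩ : N) = 0 := by simpa using h0
    exact congrArg (fun z : N => (z : ℝ)) this


lemma fin_bdd {S : Set ℝ} (hS : S.Finite) (g : ℝ → ℝ) : ∃ C, ∀ x ∈ S, g x ≤ C := by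
  obtain ⟨C, hC⟩ := (hS.image g).bddAbove
  exact ⟨C, fun x hx => hC ⟨x, hx, rfl⟩⟩

lemma comb_D {Λ : Set ℝ} {R : ℝ} (hdisc : ∀ T : ℝ, (Λ ∩ {x | |x| ≤ T}).Finite)
    (hpop : ∀ x ∈ Λ, ∀ y ∈ Λ, ∀ z, ∃ l ∈ Λ, |l - z| ≤ R ∧ l + (x - y) ∈ Λ) (T : ℝ) :
    {d | |d| ≤ T ∧ ∃ x ∈ Λ, ∃ y ∈ Λ, d = x - y}.Finite := by
  refine ((hdisc (T + R)).image2 (fun x l => x - l) (hdisc R)).subset ?_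
  rintro d ⟨hd, x, hx, y, hy, rfl⟩
  obtain ⟨l, hl, h1, h2⟩ := hpop x hx y hy 0
  rw [sub_zero] at h1
  refine ⟨l + (x - y), ⟨h2, ?_⟩, l, ⟨hl, h1⟩, by simp⟩
  exact (abs_add_le l (x - y)).trans (by linarith)

lemma comb_DD {Λ : Set ℝ} {R : ℝ} (hdisc : ∀ T : ℝ, (Λ ∩ {x | |x| ≤ T}).Finite)
    (hpop : ∀ x ∈ Λ, ∀ y ∈ Λ, ∀ z, ∃ l ∈ Λ, |l - z| ≤ R ∧ l + (x - y) ∈ Λ) (T : ℝ) :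
    {d | |d| ≤ T ∧ ∃ x ∈ Λ, ∃ y ∈ Λ, ∃ x' ∈ Λ, ∃ y' ∈ Λ, d = (x - y) - (x' - y')}.Finite := by
  refine ((comb_D hdisc hpop (T + 2 * R)).image2 (fun x l => x + l)
    ((hdisc R).image2 (fun l l' => l' - l) (hdisc R))).subset ?_
  rintro d ⟨hd, x, hx, y, hy, x', hx', y', hy', rfl⟩
  obtain ⟨l, hl, h1, h2⟩ := hpop x hx y hy 0
  obtain ⟨l', hl', h1', h2'⟩ := hpop x' hx' y' hy' 0
  rw [sub_zero] at h1 h1'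
  refine ⟨(l + (x - y)) - (l' + (x' - y')), ⟨?_, _, h2, _, h2', rfl⟩, l' - l,
    ⟨l, ⟨hl, h1⟩, l', ⟨hl', h1'⟩, rfl⟩, ?_⟩
  · rw [abs_le] at *; constructor <;> linarith [h1.1, h1.2, h1'.1, h1'.2, hd.1, hd.2]
  · simp only; ring

lemma comb_quasi {Λ : Set ℝ} {p : ℝ} (hp : p ∈ Λ) {R : ℝ} (hR : 0 < R)
    (hdd : ∀ T : ℝ, {d | |d| ≤ T ∧ ∃ x ∈ Λ, ∃ y ∈ Λ, ∃ x' ∈ Λ, ∃ y' ∈ Λ, d = (x - y) - (x' - y')}.Finite)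
    (hrd : ∀ z, ∃ l ∈ Λ, |l - z| ≤ R) (φ : ℝ →+ ℝ) :
    ∃ ℓ C : ℝ, ∀ x ∈ Λ, |φ (x - p) - ℓ * x| ≤ C := by
  classical
  have hlam : ∀ x, ∃ l ∈ Λ, |l - x| ≤ R ∧ (x ∈ Λ → l = x) := by
    intro x
    by_cases hx : x ∈ Λ
    · exact ⟨x, hx, by simpa using hR.le, fun _ => rfl⟩
    · obtain ⟨l, h1, h2⟩ := hrd x
      exact ⟨l, h1, h2, fun h => absurd h hx⟩
  choose lam hl1 hl2 hl3 using hlam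
  obtain ⟨C, hC⟩ := fin_bdd (hdd (3 * R + 1 + |p|)) (fun x => |φ x|)
  have hpp := abs_nonneg p
  have hpa := abs_le.1 (le_refl |p|)
  have hQ := quasi_lem (fun x => φ (lam x - p)) C ?_ ?_
  · obtain ⟨ℓ, C', h⟩ := hQ
    refine ⟨ℓ, C', fun x hx => ?_⟩
    have := h x
    simp only [hl3 x hx] at this
    exact this
  · intro x y
    have e : φ (lam (x + y) - p) - φ (lam x - p) - φ (lam y - p)
        = φ ((lam (x + y) - lam x) - (lam y - p)) := by
      rw [← map_sub, ← map_sub]; congr 1; ring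
    simp only [e]
    refine hC _ ⟨?_, _, hl1 _, _, hl1 _, _, hl1 _, _, hp, rfl⟩
    have h1 := abs_le.1 (hl2 (x + y))
    have h2 := abs_le.1 (hl2 x)
    have h3 := abs_le.1 (hl2 y)
    rw [abs_le]; constructor <;> linarith [h1.1, h1.2, h2.1, h2.2, h3.1, h3.2, hpa.1, hpa.2]
  · intro x hx
    refine hC _ ⟨?_, _, hl1 x, _, hp, _, hp, _, hp, by ring⟩
    have h1 := abs_le.1 (hl2 x)
    have h2 := abs_le.1 hx
    rw [abs_le]; constructor <;> linarith [h1.1, h1.2, h2.1, h2.2, hpa.1, hpa.2]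

lemma comb_slope {Λ : Set ℝ} {p : ℝ} (hp : p ∈ Λ) {R : ℝ} (hR : 0 < R)
    (hdisc : ∀ T : ℝ, (Λ ∩ {x | |x| ≤ T}).Finite)
    (hpop : ∀ x ∈ Λ, ∀ y ∈ Λ, ∀ z, ∃ l ∈ Λ, |l - z| ≤ R ∧ l + (x - y) ∈ Λ) :
    ∃ (φ : ℝ →+ ℝ) (ℓ C : ℝ), ℓ ≠ 0 ∧ (∀ x ∈ Λ, |φ (x - p) - ℓ * x| ≤ C) ∧
      ∀ x ∈ Λ, ∀ y ∈ Λ, ∃ n : ℤ, φ (x - y) = n := by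
  classical
  have hrd : ∀ z, ∃ l ∈ Λ, |l - z| ≤ R := fun z => by
    obtain ⟨l, h1, h2, -⟩ := hpop p hp p hp z
    exact ⟨l, h1, h2⟩
  obtain ⟨ι, hι, φ, hφ1, hφ2⟩ := coords _ (comb_D hdisc hpop (2 * R + 1))
  have hcl := chain_lem hR hrd (AddSubgroup.closure {d | |d| ≤ 2 * R + 1 ∧ ∃ x ∈ Λ, ∃ y ∈ Λ, d = x - y})
    (fun x hx y hy h => AddSubgroup.subset_closure ⟨h, x, hx, y, hy, rfl⟩)
  have hq := fun i => comb_quasi hp hR (comb_DD hdisc hpop) hrd (φ i)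
  choose ℓ C hC using hq
  by_cases hall : ∃ i, ℓ i ≠ 0
  · obtain ⟨i, hi⟩ := hall
    exact ⟨φ i, ℓ i, C i, hi, hC i, fun x hx y hy => hφ1 i _ (hcl x hx y hy)⟩
  · exfalso
    push Not at hall
    have hZ : ∀ x : Λ, ∀ i, ∃ n : ℤ, φ i (x - p) = n := fun x i => hφ1 i _ (hcl x x.2 p hp)
    choose n hn using hZ
    have hfin : (Set.pi Set.univ (fun i => Set.Icc (-⌈C i⌉) ⌈C i⌉)).Finite :=
      Set.Finite.pi (fun i => Set.finite_Icc _ _)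
    have hfinΛ : Finite Λ := by
      have := hfin.to_subtype
      refine Finite.of_injective (β := Set.pi Set.univ (fun i => Set.Icc (-⌈C i⌉) ⌈C i⌉))
        (fun x => ⟨n x, ?_⟩) ?_
      · intro i _
        have h := hC i x x.2
        rw [hall, zero_mul, sub_zero, hn] at h
        have h1 := abs_le.1 h
        have h2 := Int.le_ceil (C i)
        constructor
        · have : (-(⌈C i⌉ : ℝ)) ≤ n x i := by linarith [h1.1]
          exact_mod_cast this
        · have : (n x i : ℝ) ≤ ⌈C i⌉ := by linarith [h1.2]
          exact_mod_cast this
      · intro x y hxy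
        have hxy : n x = n y := congrArg Subtype.val hxy
        have : (x : ℝ) - y = 0 := by
          refine hφ2 _ (hcl x x.2 y y.2) fun i => ?_
          have : (x : ℝ) - y = (x - p) - (y - p) := by ring
          rw [this, map_sub, hn, hn, hxy, sub_self]
        exact Subtype.ext (sub_eq_zero.1 this)
    obtain ⟨M, hM⟩ := fin_bdd (Set.toFinite Λ) id
    obtain ⟨l, h1, h2⟩ := hrd (M + R + 1)
    have := hM l h1
    have h3 := abs_le.1 h2
    simp only [id] at this
    linarith [h3.1]

lemma comb {Λ : Set ℝ} {p : ℝ} (hp : p ∈ Λ) {R : ℝ} (hR : 0 < R)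
    (hdisc : ∀ T : ℝ, (Λ ∩ {x | |x| ≤ T}).Finite)
    (hpop : ∀ x ∈ Λ, ∀ y ∈ Λ, ∀ z, ∃ l ∈ Λ, |l - z| ≤ R ∧ l + (x - y) ∈ Λ) :
    ∃ α > 0, ∃ V : Set ℝ, V.Finite ∧ ∀ x ∈ Λ, ∃ v ∈ V, ∃ n : ℤ, x = v + α * n := by
  classical
  obtain ⟨φ, ℓ, C, hℓ, hC, hint⟩ := comb_slope hp hR hdisc hpop
  obtain ⟨ψ, hψ⟩ : ∃ ψ : ℝ →+ ℝ, ∀ x, ψ x = φ x - ℓ * x :=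
    ⟨φ - AddMonoidHom.mulLeft ℓ, fun x => by simp⟩
  have hψb : ∀ x ∈ Λ, ∀ y ∈ Λ, ψ (x - y) ≤ 2 * C := by
    intro x hx y hy
    have h1 := abs_le.1 (hC x hx)
    have h2 := abs_le.1 (hC y hy)
    have : ψ (x - y) = (φ (x - p) - ℓ * x) - (φ (y - p) - ℓ * y) := by
      rw [hψ]
      have : φ (x - y) = φ (x - p) - φ (y - p) := by rw [← map_sub]; congr 1; ring
      rw [this]; ring
    rw [this]; linarith [h1.1, h1.2, h2.1, h2.2]
  have hDs := comb_D hdisc hpop (2 * R + 1)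
  -- gap
  obtain ⟨ε, hε, hgap⟩ : ∃ ε > 0, ∀ x ∈ Λ, ∀ y ∈ Λ, |x - y| ≤ 2 * R + 1 → |ψ (x - y)| < ε → ψ (x - y) = 0 := by
    obtain ⟨C1, hC1⟩ := fin_bdd hDs (fun d => |ψ d|⁻¹)
    refine ⟨1 / (|C1| + 1), by positivity, fun x hx y hy h1 h2 => ?_⟩
    by_contra hne
    have h3 : |ψ (x - y)|⁻¹ ≤ C1 := hC1 (x - y) ⟨h1, x, hx, y, hy, rfl⟩
    have h4 : 0 < |ψ (x - y)| := abs_pos.2 hne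
    rw [lt_div_iff₀ (by positivity)] at h2
    rw [inv_le_comm₀ h4 (lt_of_lt_of_le (inv_pos.2 h4) h3), ] at h3
    have h5 : 0 < C1 := by
      by_contra hc
      push Not at hc
      have : C1⁻¹ ≤ 0 := inv_nonpos.2 hc
      have h3' : |ψ (x - y)|⁻¹ ≤ C1 := hC1 (x - y) ⟨h1, x, hx, y, hy, rfl⟩
      linarith [inv_pos.2 h4]
    rw [inv_le_iff_one_le_mul₀ h5] at h3
    rw [abs_of_pos h5] at h2
    nlinarith
  -- near-maximal h
  obtain ⟨x0, hx0, y0, hy0, hmax⟩ : ∃ x0 ∈ Λ, ∃ y0 ∈ Λ, ∀ x ∈ Λ, ∀ y ∈ Λ, ψ (x - y) < ψ (x0 - y0) + ε := by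
    have hne : ({t | ∃ x ∈ Λ, ∃ y ∈ Λ, t = ψ (x - y)} : Set ℝ).Nonempty := ⟨_, p, hp, p, hp, rfl⟩
    have hbd : BddAbove ({t | ∃ x ∈ Λ, ∃ y ∈ Λ, t = ψ (x - y)} : Set ℝ) := by
      refine ⟨2 * C, ?_⟩
      rintro t ⟨x, hx, y, hy, rfl⟩
      exact hψb x hx y hy
    obtain ⟨t, ⟨x0, hx0, y0, hy0, rfl⟩, ht⟩ := exists_lt_of_lt_csSup hne
      (show sSup {t | ∃ x ∈ Λ, ∃ y ∈ Λ, t = ψ (x - y)} - ε < _ by linarith)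
    refine ⟨x0, hx0, y0, hy0, fun x hx y hy => ?_⟩
    have := le_csSup hbd (show ψ (x - y) ∈ _ from ⟨x, hx, y, hy, rfl⟩)
    linarith
  generalize hh : x0 - y0 = h at hmax
  have hA : ∀ z, ∃ l ∈ {l | l ∈ Λ ∧ l + h ∈ Λ}, |l - z| ≤ R := by
    intro z
    obtain ⟨l, h1, h2, h3⟩ := hpop x0 hx0 y0 hy0 z
    rw [hh] at h3
    exact ⟨l, ⟨h1, h3⟩, h2⟩
  have hker := chain_lem hR hA ψ.ker ?_
  · obtain ⟨q, ⟨hq, hqh⟩, -⟩ := hA 0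
    refine ⟨1 / |ℓ|, by positivity, (fun d => q - ψ d / ℓ) '' _, (comb_D hdisc hpop R).image _, fun x hx => ?_⟩
    obtain ⟨l, ⟨hl, hlh⟩, hlx⟩ := hA x
    have h1 : ψ (l - q) = 0 := hker l ⟨hl, hlh⟩ q ⟨hq, hqh⟩
    obtain ⟨n, hn⟩ := hint x hx q hq
    have h2 : ψ (x - q) = ψ (x - l) := by
      have : x - q = (x - l) + (l - q) := by ring
      rw [this, map_add, h1, add_zero]
    rw [hψ, hn] at h2
    refine ⟨_, ⟨x - l, ⟨by rwa [abs_sub_comm], x, hx, l, hl, rfl⟩, rfl⟩, ?_⟩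
    simp only
    rcases lt_or_gt_of_ne hℓ with hs | hs
    · refine ⟨-n, ?_⟩
      rw [abs_of_neg hs, ← h2]; push_cast; field_simp; ring
    · refine ⟨n, ?_⟩
      rw [abs_of_pos hs, ← h2]; field_simp; ring
  · rintro x ⟨hx, hxh⟩ y ⟨hy, hyh⟩ hxy
    refine hgap x hx y hy hxy ?_
    have h1 := hmax (x + h) hxh y hy
    have h2 := hmax (y + h) hyh x hx
    have e1 : x + h - y = (x - y) + h := by ring
    have e2 : y + h - x = -(x - y) + h := by ring
    rw [e1, map_add] at h1
    rw [e2, map_add, map_neg] at h2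
    rw [abs_lt]; constructor <;> linarith


lemma CPair.recur {a b : ℝ → ℂ} (P : CPair a b) (α : ℝ) (Q : Polynomial ℂ)
    (hQ : ∀ s, b s ≠ 0 → Q.eval (e2piR α s) = 0) (x : ℝ) :
    ∑ k ∈ Finset.range (Q.natDegree + 1), Q.coeff k * a (x + k * α) = 0 := by
  choose r hr hr2 using fun k : ℕ => P.isol (x + k * α)
  obtain ⟨r0, hr0, hr0k⟩ : ∃ r0 > 0, ∀ k ∈ Finset.range (Q.natDegree + 1), r0 ≤ r k := by
    obtain ⟨k0, -, hk0⟩ := Finset.exists_min_image (Finset.range (Q.natDegree + 1)) r ⟨0, by simp⟩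
    exact ⟨r k0, hr k0, hk0⟩
  obtain ⟨u, hu1, hu2, -, -⟩ := exists_bump 0 r0 hr0
  have h1 : ∀ k ∈ Finset.range (Q.natDegree + 1),
      Q.coeff k * a (x + k * α) = ∑' s, Q.coeff k * (b s * (e2piR (x + k * α) s * (𝓕 u) s)) := by
    intro k hk
    rw [tsum_mul_left, ← P.eq_tr (𝓕 u) (x + k * α)]
    congr 1
    rw [tsum_eq_single (x + k * α)]
    · rw [four_four]; simp [hu1]
    · intro l hl
      rw [four_four]
      by_cases ha : a l = 0
      · simp [ha]
      · rw [hu2, mul_zero]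
        by_contra hc
        push Not at hc
        apply hl
        apply hr2 k l ha
        rw [sub_zero, abs_neg] at hc
        exact hc.trans_le (hr0k k hk)
  rw [Finset.sum_congr rfl h1, ← Summable.tsum_finsetSum]
  · rw [← tsum_zero]
    congr 1; ext s
    by_cases hb : b s = 0
    · simp [hb]
    · have h2 := hQ s hb
      rw [Polynomial.eval_eq_sum_range] at h2
      calc _ = (∑ k ∈ Finset.range (Q.natDegree + 1), Q.coeff k * e2piR α s ^ k) *
            (b s * (e2piR x s * (𝓕 u) s)) := by
            rw [Finset.sum_mul]
            refine Finset.sum_congr rfl fun k _ => ?_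
            rw [e2_add_left, e2_nat]; ring
        _ = 0 := by rw [h2, zero_mul]
  · intro k _
    have := P.dual.sa' (modS (x + k * α) (𝓕 u))
    simp only [modS_apply] at this
    exact this.mul_left _

lemma rec_zero (c : ℤ → ℂ) (q : ℕ → ℂ) (d : ℕ) (h0 : q 0 ≠ 0) (hd : q d ≠ 0)
    (h : ∀ n : ℤ, ∑ k ∈ Finset.range (d + 1), q k * c (n + k) = 0)
    (m : ℤ) (hw : ∀ k < d, c (m + (k : ℕ)) = 0) (n : ℤ) : c n = 0 := by
  have hend : ∀ n : ℤ, (∀ k < d, c (n + (k : ℕ)) = 0) → c (n + d) = 0 := by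
    intro n hn
    have := h n
    rw [Finset.sum_range_succ, Finset.sum_eq_zero, zero_add] at this
    · exact (mul_eq_zero.1 this).resolve_left hd
    · intro k hk; rw [hn k (Finset.mem_range.1 hk), mul_zero]
  have hbeg : ∀ n : ℤ, (∀ k < d, c (n + (k : ℕ)) = 0) → c (n - 1) = 0 := by
    intro n hn
    have := h (n - 1)
    rw [Finset.sum_range_succ', Finset.sum_eq_zero, zero_add] at this
    · have := (mul_eq_zero.1 this).resolve_left h0
      simpa using this
    · intro k hk
      have := hn k (Finset.mem_range.1 hk)
      rw [show n - 1 + ((k + 1 : ℕ) : ℤ) = n + k by push_cast; ring, this, mul_zero]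
  have hup : ∀ n : ℤ, (∀ k < d, c (n + (k : ℕ)) = 0) → (∀ k < d, c (n + 1 + (k : ℕ)) = 0) := by
    intro n hn k hk
    rcases Nat.lt_or_ge (k + 1) d with h1 | h1
    · have := hn (k + 1) h1
      rw [show n + 1 + (k : ℤ) = n + ((k + 1 : ℕ) : ℤ) by push_cast; ring]; exact this
    · have : k + 1 = d := by omega
      have h2 := hend n hn
      rw [← this] at h2
      rw [show n + 1 + (k : ℤ) = n + ((k + 1 : ℕ) : ℤ) by push_cast; ring]; exact h2
  have hdn : ∀ n : ℤ, (∀ k < d, c (n + (k : ℕ)) = 0) → (∀ k < d, c (n - 1 + (k : ℕ)) = 0) := by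
    intro n hn k hk
    rcases k with _ | k
    · simpa using hbeg n hn
    · have := hn k (by omega)
      rw [show n - 1 + ((k + 1 : ℕ) : ℤ) = n + k by push_cast; ring]; exact this
  have hall : ∀ j : ℤ, ∀ k < d, c (m + j + (k : ℕ)) = 0 := by
    intro j
    induction j using Int.induction_on with
    | zero => simpa using hw
    | succ i ih => have := hup _ ih; simpa [add_assoc] using this
    | pred i ih => have := hdn _ ih; rwa [← add_sub_assoc]
  have := hend (n - d) (by have := hall (n - d - m); rwa [add_sub_cancel] at this)
  simpa using this

lemma e2_inv_mul {α : ℝ} (hα : α ≠ 0) (n : ℤ) : e2piR (1 / α) (α * n) = 1 := by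
  rw [e2_comm, mul_comm, e2_int, e2_comm]
  have : e2piR (1 / α) α = e2piR (1 / α) 0 := by
    rw [e2_eq_iff _ _ _ (one_div_ne_zero hα)]
    exact ⟨1, by simp⟩
  rw [this, e2_zero_right, one_zpow]

lemma CPair.finspec {a b : ℝ → ℂ} (P : CPair a b) {α : ℝ} (hα : 0 < α) (V : Finset ℝ)
    (hV : ∀ x, a x ≠ 0 → ∃ v ∈ V, ∃ n : ℤ, x = v + α * n) :
    ∃ W : Finset ℝ, ∀ s, b s ≠ 0 → ∃ w ∈ W, e2piR α s = e2piR α w := by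
  obtain ⟨Q, hQdef⟩ : ∃ Q : Polynomial ℂ,
    Q = ∏ v ∈ V, (Polynomial.X - Polynomial.C (e2piR (1 / α) (-v))) := ⟨_, rfl⟩
  have hmon : Q.Monic := by rw [hQdef]; exact Polynomial.monic_prod_X_sub_C _ _
  have h0 : Q.coeff 0 ≠ 0 := by
    rw [hQdef, Polynomial.coeff_zero_eq_eval_zero, Polynomial.eval_prod, Finset.prod_ne_zero_iff]
    intro v _
    simp [e2_ne]
  have hz : ∀ s, a (-s) ≠ 0 → Q.eval (e2piR (1 / α) s) = 0 := by
    intro s hs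
    obtain ⟨v, hv, n, hn⟩ := hV _ hs
    rw [hQdef, Polynomial.eval_prod]
    apply Finset.prod_eq_zero hv
    have : s = -v + α * ((-n : ℤ) : ℝ) := by push_cast; linarith
    rw [this, e2_add_right, e2_inv_mul hα.ne']
    simp
  have hrec := P.dual.recur (1 / α) Q hz
  obtain ⟨d, hd⟩ : ∃ d, d = Q.natDegree := ⟨_, rfl⟩
  rw [← hd] at hrec
  have hlead : Q.coeff d ≠ 0 := by rw [hd, hmon.coeff_natDegree]; exact one_ne_zero
  have hfin := P.lfb 0 ((d + 1) / α)
  refine ⟨hfin.toFinset, fun s hs => ?_⟩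
  obtain ⟨m, hm⟩ : ∃ m : ℤ, m = -⌊s * α⌋ := ⟨_, rfl⟩
  have hm1 : 0 ≤ s * α + m := by rw [hm]; push_cast; linarith [Int.floor_le (s * α)]
  have hm2 : s * α + m < 1 := by rw [hm]; push_cast; linarith [Int.lt_floor_add_one (s * α)]
  obtain ⟨k, hk, hbk⟩ : ∃ k < d, b (s + (m + (k : ℕ) : ℤ) * (1 / α)) ≠ 0 := by
    by_contra hc
    push Not at hc
    apply hs
    have := rec_zero (fun n : ℤ => b (s + n * (1 / α))) (fun k => Q.coeff k) d h0 hlead ?_ m hc 0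
    · simpa using this
    · intro n
      rw [← hrec (s + n * (1 / α))]
      refine Finset.sum_congr rfl fun k _ => ?_
      congr 2; push_cast; ring
  refine ⟨_, hfin.mem_toFinset.2 ⟨hbk, ?_⟩, ?_⟩
  · have hk' : (k : ℝ) + 1 ≤ d := by exact_mod_cast hk
    have e : s + ((m + (k : ℕ) : ℤ) : ℝ) * (1 / α) = (s * α + m + k) / α := by
      push_cast; field_simp; ring
    rw [mem_ball, Real.dist_eq, sub_zero, e, abs_of_nonneg (by positivity)]
    apply div_lt_div_of_pos_right _ hα
    linarith
  · rw [e2_eq_iff _ _ _ hα.ne']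
    exact ⟨-(m + (k : ℕ)), by push_cast; ring⟩

lemma seq_exp (Y : Finset ℂ) : (∀ y ∈ Y, y ≠ 0) → ∀ (T : Module.End ℂ (ℤ → ℂ)), (∀ c n, T c n = c (n + 1)) →
    ∀ c : ℤ → ℂ, Polynomial.aeval T (∏ y ∈ Y, (Polynomial.X - Polynomial.C y)) c = 0 →
    ∃ C : ℂ → ℂ, ∀ n : ℤ, c n = ∑ y ∈ Y, C y * y ^ n := by
  classical
  induction Y using Finset.induction_on with
  | empty =>
    intro _ T hT c hc
    refine ⟨0, fun n => ?_⟩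
    simp at hc
    simp [hc]
  | insert y0 Y hy0 ih =>
    intro hne T hT c hc
    rw [Finset.prod_insert hy0, mul_comm, map_mul, Module.End.mul_apply] at hc
    obtain ⟨C, hC⟩ := ih (fun y hy => hne y (Finset.mem_insert_of_mem hy)) T hT _ hc
    have hC' : ∀ n : ℤ, c (n + 1) - y0 * c n = ∑ y ∈ Y, C y * y ^ n := by
      intro n
      rw [← hC n]
      simp [hT]
    have hy0' := hne y0 (Finset.mem_insert_self _ _)
    obtain ⟨d, hd⟩ : ∃ d : ℤ → ℂ, ∀ n, d n = c n - ∑ y ∈ Y, C y / (y - y0) * y ^ n := ⟨_, fun _ => rfl⟩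
    have hd1 : ∀ n, d (n + 1) = y0 * d n := by
      intro n
      have h1 : ∑ y ∈ Y, C y / (y - y0) * y ^ (n + 1) =
          y0 * ∑ y ∈ Y, C y / (y - y0) * y ^ n + ∑ y ∈ Y, C y * y ^ n := by
        rw [Finset.mul_sum, ← Finset.sum_add_distrib]
        refine Finset.sum_congr rfl fun y hy => ?_
        have h2 : y - y0 ≠ 0 := sub_ne_zero.2 (fun h => hy0 (h ▸ hy))
        rw [zpow_add_one₀ (hne y (Finset.mem_insert_of_mem hy))]
        field_simp; ring
      rw [hd, hd, h1]
      linear_combination hC' n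
    have hd2 : ∀ n : ℤ, d n = d 0 * y0 ^ n := by
      intro n
      induction n using Int.induction_on with
      | zero => simp
      | succ i ih => rw [hd1, ih, zpow_add_one₀ hy0']; ring
      | pred i ih =>
        have h1 := hd1 (-i - 1)
        rw [sub_add_cancel, ih] at h1
        rw [zpow_sub_one₀ hy0']
        field_simp
        linear_combination -h1
    refine ⟨fun y => if y = y0 then d 0 else C y / (y - y0), fun n => ?_⟩
    rw [Finset.sum_insert hy0]
    have h3 : ∑ y ∈ Y, (if y = y0 then d 0 else C y / (y - y0)) * y ^ n = ∑ y ∈ Y, C y / (y - y0) * y ^ n := by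
      refine Finset.sum_congr rfl fun y hy => ?_
      rw [if_neg (fun h : y = y0 => hy0 (h ▸ hy))]
    simp only
    rw [h3, if_pos trivial, ← hd2, hd]; ring

lemma CPair.classtrig {a b : ℝ → ℂ} (P : CPair a b) {α : ℝ} (W : Finset ℝ)
    (hW : ∀ s, b s ≠ 0 → ∃ w ∈ W, e2piR α s = e2piR α w) (v : ℝ) :
    ∃ p : ℝ → ℂ, IsTrigPolyR p ∧ ∀ n : ℤ, a (v + α * n) = p (v + α * n) := by
  classical
  obtain ⟨Y, hY⟩ : ∃ Y : Finset ℂ, Y = W.image (e2piR α) := ⟨_, rfl⟩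
  obtain ⟨Q, hQ⟩ : ∃ Q : Polynomial ℂ, Q = ∏ y ∈ Y, (Polynomial.X - Polynomial.C y) := ⟨_, rfl⟩
  have hz : ∀ s, b s ≠ 0 → Q.eval (e2piR α s) = 0 := by
    intro s hs
    obtain ⟨w, hw, h⟩ := hW s hs
    rw [hQ, Polynomial.eval_prod]
    apply Finset.prod_eq_zero (i := e2piR α w) (by rw [hY]; exact Finset.mem_image_of_mem _ hw)
    simp [h]
  have hrec := P.recur α Q hz
  obtain ⟨T, hT⟩ : ∃ T : Module.End ℂ (ℤ → ℂ), ∀ c n, T c n = c (n + 1) :=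
    ⟨LinearMap.funLeft ℂ ℂ (fun n => n + 1), fun _ _ => rfl⟩
  have hTk : ∀ (k : ℕ) c n, (T ^ k) c n = c (n + k) := by
    intro k
    induction k with
    | zero => simp
    | succ k ih =>
      intro c n
      rw [pow_succ, Module.End.mul_apply, ih, hT]; push_cast; congr 1; ring
  have hne : ∀ y ∈ Y, y ≠ 0 := by
    intro y hy
    rw [hY, Finset.mem_image] at hy
    obtain ⟨w, _, rfl⟩ := hy
    exact e2_ne _ _
  obtain ⟨C, hC⟩ := seq_exp Y hne T hT (fun n => a (v + α * n)) (by
    rw [← hQ, Polynomial.aeval_eq_sum_range]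
    ext n
    rw [Pi.zero_apply, ← hrec (v + α * n)]
    simp only [LinearMap.sum_apply, Finset.sum_apply, LinearMap.smul_apply, Pi.smul_apply, hTk, smul_eq_mul]
    refine Finset.sum_congr rfl fun k _ => ?_
    congr 2; push_cast; ring)
  have hw : ∀ y : Y, ∃ w, e2piR α w = y := by
    intro ⟨y, hy⟩
    rw [hY, Finset.mem_image] at hy
    obtain ⟨w, _, h⟩ := hy
    exact ⟨w, h⟩
  choose w hw using hw
  let E := Y.equivFin.symm
  refine ⟨fun x => ∑ i, (C (E i) * e2piR (-v) (w (E i))) * e2piR x (w (E i)), ⟨_, _, _, fun x => rfl⟩, fun n => ?_⟩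
  rw [hC n, ← Finset.sum_coe_sort Y (fun y => C y * y ^ n), ← E.sum_comp]
  refine Finset.sum_congr rfl fun i _ => ?_
  rw [e2_add_left, mul_comm α, e2_int, hw]
  have : e2piR (-v) (w (E i)) * e2piR v (w (E i)) = 1 := by
    rw [← e2_add_left, neg_add_cancel, e2_zero_left]
  linear_combination (-(C (E i) * (E i : ℂ) ^ n)) * this

lemma CPair.lattice {a b : ℝ → ℂ} (P : CPair a b) :
    ∃ α > 0, ∃ V : Finset ℝ, (∀ v ∈ V, 0 ≤ v ∧ v < α) ∧ ∀ x, a x ≠ 0 → ∃ v ∈ V, ∃ n : ℤ, x = v + α * n := by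
  classical
  by_cases hex : ∃ p, a p ≠ 0
  · obtain ⟨p, hp⟩ := hex
    obtain ⟨R, hR, hu⟩ := P.uniR
    obtain ⟨α, hα, V, hVf, hV⟩ := comb (Λ := {x | a x ≠ 0}) hp hR (by
      intro T
      refine (P.lfa 0 (T + 1)).subset ?_
      rintro x ⟨h1, h2⟩
      refine ⟨h1, ?_⟩
      rw [mem_ball, Real.dist_eq, sub_zero]
      have h2 : |x| ≤ T := h2
      linarith) (by
      intro x hx y hy z
      have hxy : cc a (x - y) y ≠ 0 := by
        rw [cc_ne]; refine ⟨hy, ?_⟩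
        rw [add_sub_cancel]; exact hx
      obtain ⟨l, h1, h2⟩ := hu (x - y) ⟨y, hxy⟩ z
      rw [cc_ne] at h2
      exact ⟨l, h2.1, h1, h2.2⟩)
    refine ⟨α, hα, hVf.toFinset.image (fun v => v - α * ⌊v / α⌋), ?_, ?_⟩
    · intro v hv
      rw [Finset.mem_image] at hv
      obtain ⟨u, -, rfl⟩ := hv
      have h1 := Int.floor_le (u / α)
      have h2 := Int.lt_floor_add_one (u / α)
      rw [le_div_iff₀ hα] at h1
      rw [div_lt_iff₀ hα] at h2
      constructor <;> nlinarith
    · intro x hx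
      obtain ⟨v, hv, n, h⟩ := hV x hx
      refine ⟨_, Finset.mem_image_of_mem _ (hVf.mem_toFinset.2 hv), n + ⌊v / α⌋, ?_⟩
      rw [h]; push_cast; ring
  · push Not at hex
    exact ⟨1, one_pos, ∅, by simp, fun x hx => absurd (hex x) hx⟩

lemma CPair.main {a b : ℝ → ℂ} (P : CPair a b) :
    ∃ α : ℝ, 0 < α ∧
      ∃ (J : ℕ) (v : Fin J → ℝ) (P : Fin J → ℝ → ℂ),
        (∀ j, IsTrigPolyR (P j)) ∧
        (∀ x : ℝ, a x =
          ∑ j, Set.indicator {y : ℝ | ∃ n : ℤ, y = v j + α * n} (P j) x) ∧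
        {x | a x ≠ 0} ⊆ ⋃ j, {y : ℝ | ∃ n : ℤ, y = v j + α * n} := by
  classical
  obtain ⟨α, hα, V, hV1, hV2⟩ := P.lattice
  obtain ⟨W, hW⟩ := P.finspec hα V hV2
  choose p hp1 hp2 using P.classtrig W hW
  let E := V.equivFin.symm
  refine ⟨α, hα, V.card, fun j => E j, fun j => p (E j), fun j => hp1 _, ?_, ?_⟩
  · intro x
    by_cases hx : ∃ j, ∃ n : ℤ, x = E j + α * n
    · obtain ⟨j, n, hn⟩ := hx
      rw [Finset.sum_eq_single j]
      · rw [Set.indicator_of_mem (show x ∈ {y : ℝ | ∃ n : ℤ, y = E j + α * n} from ⟨n, hn⟩), hn]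
        exact hp2 _ n
      · intro i _ hij
        rw [Set.indicator_of_notMem]
        rintro ⟨m, hm⟩
        apply hij
        apply E.injective
        apply Subtype.ext
        have h1 := hV1 _ (E i).2
        have h2 := hV1 _ (E j).2
        have h3 : ((E i : ℝ) - E j) = α * ((n - m : ℤ) : ℝ) := by push_cast; linarith
        have h4 : n - m < 1 := by
          have : ((n - m : ℤ) : ℝ) < 1 := by nlinarith
          exact_mod_cast this
        have h5 : -1 < n - m := by
          have : (-1 : ℝ) < ((n - m : ℤ) : ℝ) := by nlinarith
          exact_mod_cast this
        have h6 : n - m = 0 := by omega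
        rw [h6] at h3
        simp at h3
        linarith
      · simp
    · rw [Finset.sum_eq_zero]
      · by_contra ha
        obtain ⟨v, hv, n, hn⟩ := hV2 x ha
        exact hx ⟨E.symm ⟨v, hv⟩, n, by simpa using hn⟩
      · intro j _
        rw [Set.indicator_of_notMem]
        exact fun h => hx ⟨j, h⟩
  · intro x ha
    obtain ⟨v, hv, n, hn⟩ := hV2 x ha
    rw [Set.mem_iUnion]
    exact ⟨E.symm ⟨v, hv⟩, n, by simpa using hn⟩

lemma CPair.of_rep (a b : ℝ → ℂ) (f : TemperedDistR)
    (hrep : RepMeasureR a f) (hrepF : RepMeasureR b (fourierTDR f))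
    (hlfa : LocFiniteR {x | a x ≠ 0}) (hlfb : LocFiniteR {x | b x ≠ 0})
    (huda : UniformlyDiscreteR {x | a x ≠ 0})
    (hudb : UniformlyDiscreteR {x | b x ≠ 0}) : CPair a b where
  lfa := hlfa
  lfb := hlfb
  uda := by
    obtain ⟨η, h, h2⟩ := huda
    refine ⟨η, h, fun x y hx hy hxy => ?_⟩
    by_contra hne
    exact absurd hxy (not_lt.2 (h2 x hx y hy hne))
  udb := by
    obtain ⟨η, h, h2⟩ := hudb
    refine ⟨η, h, fun x y hx hy hxy => ?_⟩
    by_contra hne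
    exact absurd hxy (not_lt.2 (h2 x hx y hy hne))
  sa := hrep.2.1
  sb := hrepF.2.1
  eq := fun φ => by
    rw [← hrep.2.2, ← hrepF.2.2]
    rfl


/-- (Theorem 1, Lev–Olevskii.) Let `μ` be a crystalline
measure on `ℝ` with uniformly discrete support and spectrum. Then there are a
lattice `L = αℤ`, `α > 0`, points `λ_1, …, λ_J ∈ ℝ` and trigonometric
polynomials `P_1, …, P_J` such that `μ = Σ_j Σ_{λ ∈ λ_j + L} P_j(λ) δ_λ`; in
particular `supp μ` is contained in a finite union of translates of `L`. -/
theorem statement15 (a b : ℝ → ℂ) (f : TemperedDistR)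
    (hrep : RepMeasureR a f) (hrepF : RepMeasureR b (fourierTDR f))
    (hlfa : LocFiniteR {x | a x ≠ 0}) (hlfb : LocFiniteR {x | b x ≠ 0})
    (huda : UniformlyDiscreteR {x | a x ≠ 0})
    (hudb : UniformlyDiscreteR {x | b x ≠ 0}) :
    ∃ α : ℝ, 0 < α ∧
      ∃ (J : ℕ) (v : Fin J → ℝ) (P : Fin J → ℝ → ℂ),
        (∀ j, IsTrigPolyR (P j)) ∧
        (∀ x : ℝ, a x =
          ∑ j, Set.indicator {y : ℝ | ∃ n : ℤ, y = v j + α * n} (P j) x) ∧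
        {x | a x ≠ 0} ⊆ ⋃ j, {y : ℝ | ∃ n : ℤ, y = v j + α * n} := by
  exact (CPair.of_rep a b f hrep hrepF hlfa hlfb huda hudb).main
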